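/- In the construction described in the context (pseudo-random k-uniform hypergraph H satisfying R_a–R_f, with k = ℓ, i.e. packing perfect matchings), with high probability over the random choices of the partitions (X_i,Y_i), the permutations σ_i, τ_i, and the random labelling of edges, every one of the bipartite graphs G_i (i = 1,…,r) has minimum degree at least (1−2ε)·ν_k·p₀, and every two distinct vertices lying in the same part of G_i have at most (1+5ε)·ν_k·p₀² common neighbours. -/

import Mathlib

open Finset Filter MeasureTheory
open scoped ENNReal

/-- The set of elements of `Fin n` occupying positions `lo, …, lo+size-1` under the
ordering induced by the permutation `π`. -/
def blockAt {n : ℕ} (π : Equiv.Perm (Fin n)) (lo size : ℕ) : Finset (Fin n) :=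
  Finset.univ.filter fun v => lo ≤ (π.symm v).val ∧ (π.symm v).val < lo + size

/-- Using a uniformly random permutation `ρ` of `Fin r`, pick a uniformly random element
of the set `I` (the element of `I` whose `ρ`-preimage is smallest); `none` if `I = ∅`. -/
def pickUniform {r : ℕ} (ρ : Equiv.Perm (Fin r)) (I : Finset (Fin r)) : Option (Fin r) :=
  if h : (I.image ρ.symm).Nonempty then some (ρ ((I.image ρ.symm).min' h)) else none

/-- The set `X_a ∪ Y_b` determined by the permutation `π` of `Fin n` (`n = k ν`,
`k_X = ⌊k/2⌋`, `k_Y = ⌈k/2⌉`): `X` consists of the first `k_X ν` positions, split into `ν`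
consecutive blocks `X_a` of size `k_X`, and `Y` of the remaining `k_Y ν` positions, split
into `ν` consecutive blocks `Y_b` of size `k_Y`. -/
def pairOf (n k ν : ℕ) (π : Equiv.Perm (Fin n)) (a b : Fin ν) : Finset (Fin n) :=
  blockAt π ((a : ℕ) * (k / 2)) (k / 2)
    ∪ blockAt π ((k / 2) * ν + (b : ℕ) * (k - k / 2)) (k - k / 2)

/-- The partition/permutation `π` includes the set `E`. -/
def includesPairXY (n k ν : ℕ) (π : Equiv.Perm (Fin n)) (E : Finset (Fin n)) : Prop :=
  ∃ a b : Fin ν, E = pairOf n k ν π a b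

open scoped Classical in
/-- The random label of `E`: a uniformly random index `i` among those that include `E`
(chosen via the auxiliary uniform permutation `ρs E` of `Fin r`), `none` if none do. -/
noncomputable def labelP (n k ν r : ℕ) (πs : Fin r → Equiv.Perm (Fin n))
    (ρs : Finset (Fin n) → Equiv.Perm (Fin r)) (E : Finset (Fin n)) : Option (Fin r) :=
  pickUniform (ρs E) (Finset.univ.filter fun i => includesPairXY n k ν (πs i) E)

/-- `(a, b)` is an edge of the bipartite graph `G_i`: the set `X_{i,a} ∪ Y_{i,b}` is an
edge of `H` and it is labelled `i`. -/
noncomputable def edgeP (n k ν r : ℕ) (H : Finset (Finset (Fin n)))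
    (ω : (Fin r → Equiv.Perm (Fin n)) × (Finset (Fin n) → Equiv.Perm (Fin r)))
    (i : Fin r) (a b : Fin ν) : Prop :=
  pairOf n k ν (ω.1 i) a b ∈ H ∧
    labelP n k ν r ω.1 ω.2 (pairOf n k ν (ω.1 i) a b) = some i

instance instMeasPerm (α : Type*) : MeasurableSpace (Equiv.Perm α) := ⊤

/-- The uniform probability measure on a nonempty finite type. -/
noncomputable def uniformM (α : Type*) [Fintype α] [Nonempty α] [MeasurableSpace α] :
    Measure α :=
  (PMF.uniformOfFintype α).toMeasure

instance (α : Type*) [Fintype α] [Nonempty α] [MeasurableSpace α] :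
    IsProbabilityMeasure (uniformM α) := by
  unfold uniformM; infer_instance

/-- The probability measure of the construction: `r` independent uniform random
partitions-with-orderings `(X_i, Y_i, σ_i, τ_i)` (each encoded by a uniform permutation of
`Fin n`), together with independent uniform auxiliary permutations of `Fin r` (one per
potential edge) realizing the uniform random labelling. -/
noncomputable def constrMeasure2 (n r : ℕ) :
    Measure ((Fin r → Equiv.Perm (Fin n)) × (Finset (Fin n) → Equiv.Perm (Fin r))) :=
  (Measure.pi fun _ : Fin r => uniformM (Equiv.Perm (Fin n))).prod
    (Measure.pi fun _ : Finset (Fin n) => uniformM (Equiv.Perm (Fin r)))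

open scoped Classical in
/-- The neighbourhood `N_H(S)` of `S` in a `k`-uniform hypergraph `H` on `Fin n`. -/
def hNbhd (n k : ℕ) (H : Finset (Finset (Fin n))) (S : Finset (Fin n)) :
    Finset (Finset (Fin n)) :=
  Finset.univ.filter fun Y => Y.card = k - S.card ∧ S ∪ Y ∈ H

/-- The degree `d_H(S) = |N_H(S)|`. -/
def hDeg (n k : ℕ) (H : Finset (Finset (Fin n))) (S : Finset (Fin n)) : ℕ :=
  (hNbhd n k H S).card

lemma exp_le_chord (t d y : ℝ) (hd : 0 < d) (hy : |y| ≤ d) :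
    Real.exp (t * y) ≤ Real.cosh (t * d) + (y / d) * Real.sinh (t * d) := by
  have ha : 0 ≤ (1 + y / d) / 2 := by
    have : -1 ≤ y / d := by rw [le_div_iff₀ hd]; linarith [(abs_le.1 hy).1]
    linarith
  have hb : 0 ≤ (1 - y / d) / 2 := by
    have : y / d ≤ 1 := by rw [div_le_iff₀ hd]; linarith [(abs_le.1 hy).2]
    linarith
  have h := convexOn_exp.2 (Set.mem_univ (t * d)) (Set.mem_univ (-(t * d))) ha hb (by ring)
  have e : ((1 + y / d) / 2) • (t * d) + ((1 - y / d) / 2) • (-(t * d)) = t * y := by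
    simp only [smul_eq_mul]; field_simp; ring
  rw [e] at h
  refine h.trans (le_of_eq ?_)
  rw [Real.cosh_eq, Real.sinh_eq]; simp only [smul_eq_mul]; ring

lemma finite_hoeffding {ι : Type*} [Fintype ι] (y : ι → ℝ) (d t : ℝ) (hd : 0 ≤ d)
    (hy : ∀ x, |y x| ≤ d) (h0 : ∑ x, y x = 0) :
    ∑ x, Real.exp (t * y x) ≤ Fintype.card ι * Real.exp (t ^ 2 * d ^ 2 / 2) := by
  rcases hd.eq_or_lt with rfl | hd
  · have : ∀ x, y x = 0 := fun x => by simpa using hy x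
    simp [this]
  calc ∑ x, Real.exp (t * y x) ≤ ∑ x, (Real.cosh (t * d) + (y x / d) * Real.sinh (t * d)) :=
        Finset.sum_le_sum fun x _ => exp_le_chord t d (y x) hd (hy x)
    _ = Fintype.card ι * Real.cosh (t * d) := by
        rw [Finset.sum_add_distrib, ← Finset.sum_mul, ← Finset.sum_div, h0]; simp
    _ ≤ _ := by
        gcongr
        refine (Real.cosh_le_exp_half_sq _).trans (le_of_eq ?_)
        ring_nf

lemma swap_lift {n : ℕ} (x y : Fin n) :
    Equiv.Perm.decomposeFin.symm (0, Equiv.swap x y) = Equiv.swap x.succ y.succ := by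
  ext z
  refine Fin.cases ?_ (fun z => ?_) z
  · rw [Equiv.Perm.decomposeFin_symm_apply_zero, Equiv.swap_apply_of_ne_of_ne] <;>
      simp [Fin.ext_iff]
  · rw [Equiv.Perm.decomposeFin_symm_apply_succ]
    simp only [Equiv.swap_self, Equiv.refl_apply, Equiv.swap_apply_def, Fin.succ_inj]
    split_ifs <;> rfl

lemma decomp_eq {n : ℕ} (x : Fin (n+1)) (e : Equiv.Perm (Fin n)) :
    Equiv.Perm.decomposeFin.symm (x, e) = Equiv.swap 0 x * Equiv.Perm.decomposeFin.symm (0, e) := by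
  ext z
  refine Fin.cases ?_ (fun z => ?_) z
  · simp
  · simp

lemma decomp_mul_swap {n : ℕ} (x : Fin (n+1)) (e : Equiv.Perm (Fin n)) (a b : Fin n) :
    Equiv.Perm.decomposeFin.symm (x, e * Equiv.swap a b)
      = Equiv.Perm.decomposeFin.symm (x, e) * Equiv.swap a.succ b.succ := by
  rw [← swap_lift]
  ext z
  refine Fin.cases ?_ (fun z => ?_) z
  · simp
  · simp

lemma perm_mgf (n : ℕ) (g : Equiv.Perm (Fin n) → ℝ) (c : ℝ) (hc : 0 ≤ c)
    (hg : ∀ π x y, |g (π * Equiv.swap x y) - g π| ≤ c) (t : ℝ) :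
    ∑ π, Real.exp (t * (g π - (∑ π, g π) / (n.factorial : ℝ)))
      ≤ n.factorial * Real.exp (n * (t ^ 2 * (2 * c) ^ 2 / 2)) := by
  induction n with
  | zero => simp
  | succ n ih =>
    set D := (Equiv.Perm.decomposeFin (n := n)).symm with hD
    set h : Fin (n+1) → Equiv.Perm (Fin n) → ℝ := fun x e => g (D (x, e)) with hh
    set m : Fin (n+1) → ℝ := fun x => (∑ e, h x e) / (n.factorial : ℝ) with hm
    set M : ℝ := (∑ π, g π) / ((n+1).factorial : ℝ) with hM
    have hf : (0:ℝ) < n.factorial := by positivity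
    have hsum : ∀ F : Equiv.Perm (Fin (n+1)) → ℝ, ∑ π, F π = ∑ x, ∑ e, F (D (x, e)) := by
      intro F
      rw [← Equiv.sum_comp D F, Fintype.sum_prod_type]
    have hMm : M * (n + 1) = ∑ x, m x := by
      rw [hM, hsum, hm, ← Finset.sum_div, Nat.factorial_succ]
      push_cast
      field_simp
      rfl
    have hleft : ∀ x e, |h x e - h 0 e| ≤ c := by
      intro x e
      have := hg (D (0, e)) ((D (0,e))⁻¹ 0) ((D (0,e))⁻¹ x)
      have e2 : D (x, e) = D (0, e) * Equiv.swap ((D (0,e))⁻¹ 0) ((D (0,e))⁻¹ x) := by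
        rw [Equiv.mul_swap_eq_swap_mul]
        have := decomp_eq x e
        simpa using this
      rw [← e2] at this
      exact this
    have hm0 : ∀ x, |m x - m 0| ≤ c := by
      intro x
      rw [hm]
      simp only
      rw [← sub_div, ← Finset.sum_sub_distrib, abs_div, abs_of_pos hf, div_le_iff₀ hf]
      refine (Finset.abs_sum_le_sum_abs _ _).trans ?_
      refine (Finset.sum_le_sum fun e _ => hleft x e).trans (le_of_eq ?_)
      simp [Fintype.card_perm, mul_comm]
    have hM0 : |M - m 0| ≤ c := by
      have : (M - m 0) * (n+1) = ∑ x, (m x - m 0) := by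
        rw [Finset.sum_sub_distrib, ← hMm]; simp; ring
      have h2 : |(M - m 0) * (n+1)| ≤ c * (n+1) := by
        rw [this]
        refine (Finset.abs_sum_le_sum_abs _ _).trans ?_
        refine (Finset.sum_le_sum fun e _ => hm0 e).trans (le_of_eq ?_)
        simp [mul_comm]
      rw [abs_mul, abs_of_pos (by positivity : (0:ℝ) < n + 1)] at h2
      exact le_of_mul_le_mul_right h2 (by positivity)
    have hy : ∀ x, |m x - M| ≤ 2 * c := by
      intro x
      have h1 := abs_le.1 (hm0 x)
      have h2 := abs_le.1 hM0
      rw [abs_le]; constructor <;> linarith [h1.1, h1.2, h2.1, h2.2]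
    have hfin := finite_hoeffding (fun x => m x - M) (2 * c) t (by linarith) hy (by
      rw [Finset.sum_sub_distrib, ← hMm]; simp; ring)
    rw [hsum]
    have hx : ∀ x, ∑ e, Real.exp (t * (g (D (x, e)) - M)) ≤
        Real.exp (t * (m x - M)) * (n.factorial * Real.exp (n * (t ^ 2 * (2 * c) ^ 2 / 2))) := by
      intro x
      have := ih (h x) (by
        intro π a b
        simp only [hh]
        rw [hD, decomp_mul_swap]
        exact hg _ _ _)
      refine le_trans (le_of_eq ?_) (mul_le_mul_of_nonneg_left this (Real.exp_pos _).le)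
      rw [Finset.mul_sum]
      refine Finset.sum_congr rfl fun e _ => ?_
      rw [← Real.exp_add]
      congr 1
      simp only [hh, hm]; ring
    refine (Finset.sum_le_sum fun x _ => hx x).trans ?_
    rw [← Finset.sum_mul]
    refine (mul_le_mul_of_nonneg_right hfin (by positivity)).trans (le_of_eq ?_)
    rw [Nat.factorial_succ]
    push_cast
    rw [Fintype.card_fin]
    push_cast
    rw [show ((n:ℝ)+1) * (t ^ 2 * (2 * c) ^ 2 / 2) = t ^ 2 * (2 * c) ^ 2 / 2 + n * (t ^ 2 * (2 * c) ^ 2 / 2) by ring, Real.exp_add]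
    ring

lemma perm_tail (n : ℕ) (hn : 0 < n) (g : Equiv.Perm (Fin n) → ℝ) (c : ℝ) (hc : 0 < c)
    (hg : ∀ π x y, |g (π * Equiv.swap x y) - g π| ≤ c) (s : ℝ) (hs : 0 ≤ s) :
    ((Finset.univ.filter fun π => (∑ π, g π) / (n.factorial : ℝ) + s ≤ g π).card : ℝ)
      ≤ n.factorial * Real.exp (- (s ^ 2 / (8 * n * c ^ 2))) := by
  set M := (∑ π, g π) / (n.factorial : ℝ) with hM
  have hn' : (0:ℝ) < n := by exact_mod_cast hn
  set t : ℝ := s / (4 * n * c ^ 2) with ht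
  have ht0 : 0 ≤ t := by positivity
  have h1 := perm_mgf n g c hc.le hg t
  rw [← hM] at h1
  have h2 : ((Finset.univ.filter fun π => M + s ≤ g π).card : ℝ) * Real.exp (t * s)
      ≤ ∑ π, Real.exp (t * (g π - M)) := by
    rw [← nsmul_eq_mul, ← Finset.sum_const]
    refine (Finset.sum_le_sum fun π hπ => ?_).trans
      (Finset.sum_le_sum_of_subset_of_nonneg (Finset.filter_subset _ _)
        fun _ _ _ => (Real.exp_pos _).le)
    apply Real.exp_le_exp.2
    apply mul_le_mul_of_nonneg_left _ ht0
    have := (Finset.mem_filter.1 hπ).2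
    linarith
  have h3 := h2.trans h1
  rw [← le_div_iff₀ (Real.exp_pos _), mul_div_assoc, ← Real.exp_sub] at h3
  refine h3.trans (le_of_eq ?_)
  congr 2
  rw [ht]; field_simp; ring

lemma uniformM_real {α : Type*} [Fintype α] [Nonempty α] [MeasurableSpace α]
    [DiscreteMeasurableSpace α] (P : α → Prop) [DecidablePred P] :
    (uniformM α).real {x | P x} = ((Finset.univ.filter P).card : ℝ) / Fintype.card α := by
  unfold uniformM Measure.real
  have hm : MeasurableSet {x | P x} := MeasurableSet.of_discrete
  rw [PMF.toMeasure_uniformOfFintype_apply _ hm]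
  simp [Fintype.card_subtype]

instance instDiscPerm (α : Type*) : DiscreteMeasurableSpace (Equiv.Perm α) :=
  ⟨fun _ => trivial⟩

/-- positions -/
def posBlock (n lo s : ℕ) : Finset (Fin n) :=
  Finset.univ.filter fun x => lo ≤ x.val ∧ x.val < lo + s

lemma blockAt_eq {n : ℕ} (π : Equiv.Perm (Fin n)) (lo s : ℕ) :
    blockAt π lo s = (posBlock n lo s).map π.toEmbedding := by
  ext v
  simp only [blockAt, posBlock, Finset.mem_filter, Finset.mem_univ, true_and, Finset.mem_map_equiv]

lemma posBlock_card (n lo s : ℕ) (h : lo + s ≤ n) : (posBlock n lo s).card = s := by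
  have : (posBlock n lo s).map Fin.valEmbedding = Finset.Ico lo (lo + s) := by
    ext x
    simp only [posBlock, Finset.mem_map, Finset.mem_filter, Finset.mem_univ, true_and,
      Fin.valEmbedding_apply, Finset.mem_Ico]
    constructor
    · rintro ⟨a, h, rfl⟩; exact h
    · intro hx; exact ⟨⟨x, by omega⟩, hx, rfl⟩
  rw [← Finset.card_map, this]; simp

lemma count_perm_map {n : ℕ} (T E : Finset (Fin n)) (h : E.card = T.card) :
    (Finset.univ.filter fun π : Equiv.Perm (Fin n) => T.map π.toEmbedding = E).card
      * n.choose T.card = n.factorial := by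
  have key : ∀ E' ∈ Finset.powersetCard T.card (Finset.univ : Finset (Fin n)),
      (Finset.univ.filter fun π : Equiv.Perm (Fin n) => T.map π.toEmbedding = E').card
      = (Finset.univ.filter fun π : Equiv.Perm (Fin n) => T.map π.toEmbedding = E).card := by
    intro E' hE'
    have hc : E'.card = E.card := by rw [(Finset.mem_powersetCard.1 hE').2, h]
    obtain ⟨σ, hσ⟩ : ∃ σ : Equiv.Perm (Fin n), E'.map σ.toEmbedding = E := by
      let e : {x // x ∈ E'} ≃ {x // x ∈ E} := Finset.equivOfCardEq hc
      refine ⟨e.extendSubtype, ?_⟩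
      apply Finset.eq_of_subset_of_card_le
      · intro x hx
        obtain ⟨y, hy, rfl⟩ := Finset.mem_map.1 hx
        exact e.extendSubtype_mem y hy
      · simp [hc]
    apply Finset.card_bij' (fun π _ => σ * π) (fun π _ => σ⁻¹ * π)
    · intro π hπ
      simp only [Finset.mem_filter, Finset.mem_univ, true_and] at hπ ⊢
      rw [← hσ, ← hπ, Finset.map_map]; rfl
    · intro π hπ
      simp only [Finset.mem_filter, Finset.mem_univ, true_and] at hπ ⊢
      have : (E'.map σ.toEmbedding).map (σ⁻¹).toEmbedding = E' := by
        rw [Finset.map_map]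
        ext x; simp
      rw [← this, hσ, ← hπ, Finset.map_map]; rfl
    · intro π _; simp
    · intro π _; simp
  have h2 := Finset.card_eq_sum_card_fiberwise
    (f := fun π : Equiv.Perm (Fin n) => T.map π.toEmbedding)
    (s := Finset.univ) (t := Finset.powersetCard T.card (Finset.univ : Finset (Fin n)))
    (by intro π _; simp [Finset.mem_powersetCard])
  rw [Finset.sum_congr rfl key] at h2
  simp [Fintype.card_perm] at h2
  rw [h2]; ring

lemma perm_map_prob {n : ℕ} (T E : Finset (Fin n)) (h : E.card = T.card) :
    ((Finset.univ.filter fun π : Equiv.Perm (Fin n) => T.map π.toEmbedding = E).card : ℝ)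
      = n.factorial / (n.choose T.card : ℝ) := by
  have hc : 0 < n.choose T.card := Nat.choose_pos (by simpa using Finset.card_le_univ T)
  rw [eq_div_iff (by positivity)]
  exact_mod_cast count_perm_map T E h

section family
variable {n ν : ℕ} (T : Fin ν → Finset (Fin n)) (F : Finset (Finset (Fin n)))

/-- number of blocks landing in the family -/
def famCount (π : Equiv.Perm (Fin n)) : ℕ :=
  (Finset.univ.filter fun b => (T b).map π.toEmbedding ∈ F).card

lemma famCount_sum (s : ℕ) (hT : ∀ b, (T b).card = s) (hF : ∀ Y ∈ F, Y.card = s) :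
    (∑ π, (famCount T F π : ℝ)) / n.factorial = ν * F.card / (n.choose s : ℝ) := by
  have h1 : ∀ π, (famCount T F π : ℝ)
      = ∑ b, ∑ Y ∈ F, if (T b).map π.toEmbedding = Y then (1:ℝ) else 0 := by
    intro π
    simp [famCount]
  simp_rw [h1]
  rw [Finset.sum_comm]
  have h2 : ∀ b, ∑ π : Equiv.Perm (Fin n), ∑ Y ∈ F, (if (T b).map π.toEmbedding = Y then (1:ℝ) else 0)
      = F.card * (n.factorial / (n.choose s : ℝ)) := by
    intro b
    rw [Finset.sum_comm]
    rw [← nsmul_eq_mul, ← Finset.sum_const]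
    refine Finset.sum_congr rfl fun Y hY => ?_
    rw [← hT b, ← perm_map_prob (T b) Y (by rw [hT, hF Y hY])]
    simp
  simp_rw [h2]
  have : (n.factorial : ℝ) ≠ 0 := by positivity
  simp
  field_simp

lemma famCount_lip (hT : ∀ b b', b ≠ b' → Disjoint (T b) (T b')) (π : Equiv.Perm (Fin n))
    (x y : Fin n) :
    |(famCount T F (π * Equiv.swap x y) : ℝ) - famCount T F π| ≤ 2 := by
  have hone : ∀ x, ∑ b, (if x ∈ T b then (1:ℝ) else 0) ≤ 1 := by
    intro x
    rw [Finset.sum_boole]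
    have : (Finset.univ.filter fun b => x ∈ T b).card ≤ 1 := by
      rw [Finset.card_le_one]
      intro b hb b' hb'
      by_contra hne
      exact Finset.disjoint_left.1 (hT b b' hne) (Finset.mem_filter.1 hb).2
        (Finset.mem_filter.1 hb').2
    exact_mod_cast this
  have h1 : ∀ π, (famCount T F π : ℝ)
      = ∑ b, if (T b).map π.toEmbedding ∈ F then (1:ℝ) else 0 := by
    intro π
    simp [famCount]
  rw [h1, h1, ← Finset.sum_sub_distrib]
  refine (Finset.abs_sum_le_sum_abs _ _).trans ?_
  refine (Finset.sum_le_sum (g := fun b => (if x ∈ T b then (1:ℝ) else 0)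
    + if y ∈ T b then (1:ℝ) else 0) fun b _ => ?_).trans ?_
  · by_cases hx : x ∈ T b
    · simp only [hx, if_true]
      split_ifs <;> norm_num
    by_cases hy : y ∈ T b
    · simp only [hy, if_true]
      split_ifs <;> norm_num
    have : (T b).map (π * Equiv.swap x y).toEmbedding = (T b).map π.toEmbedding := by
      rw [Finset.map_eq_image, Finset.map_eq_image]
      apply Finset.image_congr
      intro z hz
      have hz : z ∈ T b := hz
      have h1 : z ≠ x := fun h => hx (h ▸ hz)
      have h2 : z ≠ y := fun h => hy (h ▸ hz)
      simp [Equiv.swap_apply_of_ne_of_ne h1 h2]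
    rw [this]; simp [hx, hy]
  · rw [Finset.sum_add_distrib]
    linarith [hone x, hone y]

lemma famCount_upper (hn : 0 < n) (hT : ∀ b b', b ≠ b' → Disjoint (T b) (T b'))
    (s : ℕ) (hTs : ∀ b, (T b).card = s) (hF : ∀ Y ∈ F, Y.card = s) (t : ℝ) (ht : 0 ≤ t) :
    (uniformM (Equiv.Perm (Fin n))).real
      {π | (ν * F.card / (n.choose s : ℝ)) + t ≤ famCount T F π}
      ≤ Real.exp (-(t ^ 2 / (32 * n))) := by
  classical
  rw [uniformM_real]
  have := perm_tail n hn (fun π => (famCount T F π : ℝ)) 2 (by norm_num)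
    (famCount_lip T F hT) t ht
  rw [famCount_sum T F s hTs hF] at this
  rw [Fintype.card_perm, Fintype.card_fin, div_le_iff₀ (by positivity), mul_comm (Real.exp _)]
  refine this.trans (le_of_eq ?_)
  congr 4; ring

lemma famCount_lower (hn : 0 < n) (hT : ∀ b b', b ≠ b' → Disjoint (T b) (T b'))
    (s : ℕ) (hTs : ∀ b, (T b).card = s) (hF : ∀ Y ∈ F, Y.card = s) (t : ℝ) (ht : 0 ≤ t) :
    (uniformM (Equiv.Perm (Fin n))).real
      {π | (famCount T F π : ℝ) ≤ (ν * F.card / (n.choose s : ℝ)) - t}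
      ≤ Real.exp (-(t ^ 2 / (32 * n))) := by
  classical
  rw [uniformM_real]
  have := perm_tail n hn (fun π => -(famCount T F π : ℝ)) 2 (by norm_num)
    (fun π x y => by
      have := famCount_lip T F hT π x y
      rw [abs_sub_comm] at this
      rwa [neg_sub_neg]) t ht
  rw [Finset.sum_neg_distrib, neg_div, famCount_sum T F s hTs hF] at this
  rw [Fintype.card_perm, Fintype.card_fin, div_le_iff₀ (by positivity), mul_comm (Real.exp _)]
  refine le_trans (le_of_eq ?_) (this.trans (le_of_eq ?_))
  · congr 2
    ext π
    simp only [Finset.mem_filter, Finset.mem_univ, true_and]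
    constructor <;> intro h <;> linarith
  · congr 4; ring
end family

lemma pick_eq_some {r : ℕ} (ρ : Equiv.Perm (Fin r)) (I : Finset (Fin r)) (i : Fin r) :
    pickUniform ρ I = some i ↔ i ∈ I ∧ ∀ x ∈ I, ρ.symm i ≤ ρ.symm x := by
  unfold pickUniform
  split_ifs with h
  · rw [Option.some_inj]
    constructor
    · rintro rfl
      have := Finset.min'_mem _ h
      obtain ⟨x, hx, hx'⟩ := Finset.mem_image.1 this
      refine ⟨?_, fun y hy => ?_⟩
      · rw [← hx']; simpa using hx
      · rw [Equiv.symm_apply_apply]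
        exact Finset.min'_le _ _ (Finset.mem_image_of_mem _ hy)
    · rintro ⟨hi, hx⟩
      rw [← Equiv.eq_symm_apply]
      apply le_antisymm
      · exact Finset.min'_le _ _ (Finset.mem_image_of_mem _ hi)
      · apply Finset.le_min'
        intro y hy
        obtain ⟨x, hx1, rfl⟩ := Finset.mem_image.1 hy
        exact hx x hx1
  · simp only [reduceCtorEq, false_iff, not_and]
    intro hi
    exact absurd ⟨_, Finset.mem_image_of_mem _ hi⟩ h

lemma pick_count {r : ℕ} (I : Finset (Fin r)) (i : Fin r) (hi : i ∈ I) :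
    (Finset.univ.filter fun ρ : Equiv.Perm (Fin r) => pickUniform ρ I = some i).card * I.card
      = r.factorial := by
  have key : ∀ i' ∈ I, 
      (Finset.univ.filter fun ρ : Equiv.Perm (Fin r) => pickUniform ρ I = some i').card =
      (Finset.univ.filter fun ρ : Equiv.Perm (Fin r) => pickUniform ρ I = some i).card := by
    intro i' hi'
    have hsw : ∀ x ∈ I, Equiv.swap i i' x ∈ I := by
      intro x hx
      rw [Equiv.swap_apply_def]; split_ifs <;> assumption
    have main : ∀ (u v : Fin r), u ∈ I → v ∈ I → Equiv.swap i i' u = v → ∀ ρ : Equiv.Perm (Fin r),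
        pickUniform ρ I = some u → pickUniform (Equiv.swap i i' * ρ) I = some v := by
      intro u v hu hv huv ρ h
      rw [pick_eq_some] at h ⊢
      refine ⟨hv, fun x hx => ?_⟩
      have e : ∀ z, (Equiv.swap i i' * ρ).symm z = ρ.symm (Equiv.swap i i' z) := by
        intro z
        rw [Equiv.symm_apply_eq]
        simp
      rw [e, e, ← huv, Equiv.swap_apply_self]
      exact h.2 _ (hsw x hx)
    apply Finset.card_bij' (fun ρ _ => Equiv.swap i i' * ρ) (fun ρ _ => Equiv.swap i i' * ρ)
    · intro ρ h
      simp only [Finset.mem_filter, Finset.mem_univ, true_and] at h ⊢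
      exact main i' i hi' hi (by simp) ρ h
    · intro ρ h
      simp only [Finset.mem_filter, Finset.mem_univ, true_and] at h ⊢
      exact main i i' hi hi' (by simp) ρ h
    · intro ρ _; simp
    · intro ρ _; simp
  have h2 := Finset.card_eq_sum_card_fiberwise
    (f := fun ρ : Equiv.Perm (Fin r) => pickUniform ρ I)
    (s := Finset.univ) (t := I.map Function.Embedding.some)
    (by
      intro ρ _
      have hne : (I.image ρ.symm).Nonempty := ⟨_, Finset.mem_image_of_mem _ hi⟩
      have : pickUniform ρ I = some (ρ ((I.image ρ.symm).min' hne)) := by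
        unfold pickUniform; rw [dif_pos hne]
      simp only [Finset.coe_map, Set.mem_image, Finset.mem_coe]
      exact ⟨_, ((pick_eq_some _ _ _).1 this).1, this.symm⟩)
  rw [Finset.sum_map] at h2
  simp only [Function.Embedding.some_apply] at h2
  rw [Finset.sum_congr rfl key] at h2
  simp [Fintype.card_perm] at h2
  rw [h2]; ring

lemma pick_prob {r : ℕ} (I : Finset (Fin r)) (i : Fin r) (hi : i ∈ I) :
    (uniformM (Equiv.Perm (Fin r))).real {ρ | pickUniform ρ I = some i} = 1 / (I.card : ℝ) := by
  classical
  rw [uniformM_real, Fintype.card_perm, Fintype.card_fin]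
  have h0 : 0 < I.card := Finset.card_pos.2 ⟨i, hi⟩
  have := pick_count I i hi
  rw [div_eq_div_iff (by positivity) (by positivity)]
  rw [one_mul]
  exact_mod_cast this

/-- positions of the pair -/
def posPair (n k ν : ℕ) (a b : Fin ν) : Finset (Fin n) :=
  posBlock n ((a : ℕ) * (k / 2)) (k / 2)
    ∪ posBlock n ((k / 2) * ν + (b : ℕ) * (k - k / 2)) (k - k / 2)

lemma pairOf_eq (n k ν : ℕ) (π : Equiv.Perm (Fin n)) (a b : Fin ν) :
    pairOf n k ν π a b = (posPair n k ν a b).map π.toEmbedding := by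
  unfold pairOf posPair
  rw [blockAt_eq, blockAt_eq, Finset.map_union]

lemma block_lt (s ν : ℕ) (a : Fin ν) : (a : ℕ) * s + s ≤ s * ν := by
  have := a.2
  calc (a:ℕ) * s + s = s * (a + 1) := by ring
    _ ≤ s * ν := Nat.mul_le_mul_left _ this

lemma split_n (k ν : ℕ) : (k / 2) * ν + (k - k/2) * ν = k * ν := by
  rw [← Nat.add_mul]; congr 1; omega

lemma posX_card (k ν : ℕ) (a : Fin ν) : (posBlock (k * ν) ((a : ℕ) * (k / 2)) (k / 2)).card = k / 2 := by
  apply posBlock_card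
  have := block_lt (k/2) ν a
  have := split_n k ν
  omega

lemma posY_card (k ν : ℕ) (b : Fin ν) :
    (posBlock (k * ν) ((k / 2) * ν + (b : ℕ) * (k - k / 2)) (k - k / 2)).card = k - k / 2 := by
  apply posBlock_card
  have := block_lt (k - k/2) ν b
  have := split_n k ν
  omega

lemma pos_lt {s : ℕ} {x y : ℕ} (h : x < y) : x * s + s ≤ y * s := by
  calc x * s + s = (x + 1) * s := by ring
    _ ≤ y * s := Nat.mul_le_mul_right _ h

lemma posBlock_disj (n lo s : ℕ) (x y : ℕ) (h : x ≠ y) :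
    Disjoint (posBlock n (lo + x * s) s) (posBlock n (lo + y * s) s) := by
  rw [Finset.disjoint_left]
  intro z hz hz'
  simp only [posBlock, Finset.mem_filter, Finset.mem_univ, true_and] at hz hz'
  rcases lt_or_gt_of_ne h with h | h
  · have := pos_lt (s := s) h; omega
  · have := pos_lt (s := s) h; omega

lemma posX_disj (n k ν : ℕ) (a a' : Fin ν) (h : a ≠ a') :
    Disjoint (posBlock n ((a : ℕ) * (k / 2)) (k / 2)) (posBlock n ((a' : ℕ) * (k / 2)) (k / 2)) := by
  have := posBlock_disj n 0 (k/2) a a' (by simpa [Fin.ext_iff] using h)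
  simpa using this

lemma posY_disj (n k ν : ℕ) (a a' : Fin ν) (h : a ≠ a') :
    Disjoint (posBlock n ((k / 2) * ν + (a : ℕ) * (k - k / 2)) (k - k / 2))
      (posBlock n ((k / 2) * ν + (a' : ℕ) * (k - k / 2)) (k - k / 2)) :=
  posBlock_disj n _ _ a a' (by simpa [Fin.ext_iff] using h)

lemma posXY_disj (n k ν : ℕ) (a b : Fin ν) :
    Disjoint (posBlock n ((a : ℕ) * (k / 2)) (k / 2))
      (posBlock n ((k / 2) * ν + (b : ℕ) * (k - k / 2)) (k - k / 2)) := by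
  rw [Finset.disjoint_left]
  intro z hz hz'
  simp only [posBlock, Finset.mem_filter, Finset.mem_univ, true_and] at hz hz'
  have := block_lt (k/2) ν a
  omega

lemma posPair_card (k ν : ℕ) (a b : Fin ν) : (posPair (k * ν) k ν a b).card = k := by
  unfold posPair
  rw [Finset.card_union_of_disjoint (posXY_disj _ _ _ _ _), posX_card, posY_card]; omega

lemma posPair_inj (k ν : ℕ) (hk : 2 ≤ k) (a b a' b' : Fin ν)
    (h : posPair (k * ν) k ν a b = posPair (k * ν) k ν a' b') : a = a' ∧ b = b' := by
  have hX : (posBlock (k * ν) ((a : ℕ) * (k / 2)) (k / 2)).Nonempty := by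
    rw [← Finset.card_pos, posX_card]; omega
  have hY : (posBlock (k * ν) ((k / 2) * ν + (b : ℕ) * (k - k / 2)) (k - k / 2)).Nonempty := by
    rw [← Finset.card_pos, posY_card]; omega
  obtain ⟨x, hx⟩ := hX
  obtain ⟨y, hy⟩ := hY
  constructor
  · by_contra hne
    have : x ∈ posPair (k * ν) k ν a' b' := by
      rw [← h]; exact Finset.mem_union_left _ hx
    rcases Finset.mem_union.1 this with h1 | h1
    · exact Finset.disjoint_left.1 (posX_disj _ k ν a a' hne) hx h1
    · exact Finset.disjoint_left.1 (posXY_disj _ k ν a b') hx h1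
  · by_contra hne
    have : y ∈ posPair (k * ν) k ν a' b' := by
      rw [← h]; exact Finset.mem_union_right _ hy
    rcases Finset.mem_union.1 this with h1 | h1
    · exact Finset.disjoint_left.1 (posXY_disj _ k ν a' b) h1 hy
    · exact Finset.disjoint_left.1 (posY_disj _ k ν b b' hne) hy h1

lemma pairOf_inj (k ν : ℕ) (hk : 2 ≤ k) (π : Equiv.Perm (Fin (k * ν))) (a b a' b' : Fin ν)
    (h : pairOf (k * ν) k ν π a b = pairOf (k * ν) k ν π a' b') : a = a' ∧ b = b' := by
  rw [pairOf_eq, pairOf_eq] at h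
  exact posPair_inj k ν hk a b a' b' (Finset.map_injective _ h)

lemma includes_prob (k ν : ℕ) (hk : 2 ≤ k) (E : Finset (Fin (k * ν))) (hE : E.card = k) :
    (uniformM (Equiv.Perm (Fin (k * ν)))).real {π | includesPairXY (k * ν) k ν π E}
      = (ν : ℝ) ^ 2 / ((k * ν).choose k : ℝ) := by
  classical
  rw [uniformM_real, Fintype.card_perm, Fintype.card_fin]
  have h1 : (Finset.univ.filter fun π : Equiv.Perm (Fin (k * ν)) => includesPairXY (k * ν) k ν π E)
      = (Finset.univ : Finset (Fin ν × Fin ν)).biUnion fun ab =>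
        Finset.univ.filter fun π : Equiv.Perm (Fin (k * ν)) =>
          (posPair (k * ν) k ν ab.1 ab.2).map π.toEmbedding = E := by
    ext π
    simp only [includesPairXY, pairOf_eq, Finset.mem_filter, Finset.mem_univ, true_and,
      Finset.mem_biUnion, Prod.exists]
    constructor <;> rintro ⟨a, b, h⟩ <;> exact ⟨a, b, h.symm⟩
  rw [h1, Finset.card_biUnion]
  · push_cast
    have h2 : ∀ ab : Fin ν × Fin ν, ((Finset.univ.filter fun π : Equiv.Perm (Fin (k * ν)) =>
          (posPair (k * ν) k ν ab.1 ab.2).map π.toEmbedding = E).card : ℝ)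
          = (k * ν).factorial / ((k * ν).choose k : ℝ) := by
      intro ab
      rw [perm_map_prob _ _ (by rw [hE, posPair_card]), posPair_card]
    rw [Finset.sum_congr rfl fun ab _ => h2 ab]
    have : ((k * ν).factorial : ℝ) ≠ 0 := by positivity
    simp
    field_simp
  · intro ab _ ab' _ hne
    simp only [Function.onFun]
    rw [Finset.disjoint_left]
    intro π h h'
    simp only [Finset.mem_filter, Finset.mem_univ, true_and] at h h'
    have := posPair_inj k ν hk _ _ _ _ (Finset.map_injective _ (h.trans h'.symm))
    exact hne (Prod.ext this.1 this.2)

section binom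
variable {α : Type*} [Finite α] [MeasurableSpace α] [DiscreteMeasurableSpace α]
  (μ : Measure α) [IsProbabilityMeasure μ] (A : α → Prop) [DecidablePred A] (r : ℕ)

lemma binom_mgf (t : ℝ) :
    ProbabilityTheory.mgf (fun ω : Fin r → α => ((Finset.univ.filter fun i => A (ω i)).card : ℝ))
      (Measure.pi fun _ : Fin r => μ) t
      ≤ Real.exp (r * μ.real {x | A x} * (Real.exp t - 1)) := by
  unfold ProbabilityTheory.mgf
  have h1 : ∀ ω : Fin r → α, Real.exp (t * ((Finset.univ.filter fun i => A (ω i)).card : ℝ))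
      = ∏ i, (fun x => 1 + ({x | A x} : Set α).indicator (fun _ => Real.exp t - 1) x) (ω i) := by
    intro ω
    rw [Finset.card_filter]
    push_cast
    rw [Finset.mul_sum, Real.exp_sum]
    refine Finset.prod_congr rfl fun i _ => ?_
    by_cases h : A (ω i) <;> simp [h]
  simp_rw [h1]
  rw [integral_fintype_prod_eq_pow (μ := μ) (ι := Fin r)
    (fun x => 1 + ({x | A x} : Set α).indicator (fun _ => Real.exp t - 1) x)]
  rw [integral_add Integrable.of_finite Integrable.of_finite,
    integral_indicator MeasurableSet.of_discrete]
  simp only [integral_const, probReal_univ, smul_eq_mul, mul_one, measureReal_restrict_apply_univ,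
    Fintype.card_fin]
  have h2 : 0 ≤ 1 + μ.real {x | A x} * (Real.exp t - 1) := by
    have h3 : μ.real {x | A x} ≤ 1 := measureReal_le_one
    have h4 : 0 ≤ μ.real {x | A x} := measureReal_nonneg
    nlinarith [Real.exp_pos t]
  refine (pow_le_pow_left₀ h2 (by linarith [Real.add_one_le_exp (μ.real {x | A x} * (Real.exp t - 1))] :
    _ ≤ Real.exp (μ.real {x | A x} * (Real.exp t - 1))) r).trans (le_of_eq ?_)
  rw [← Real.exp_nat_mul]; ring_nf

lemma binom_upper (δ : ℝ) (hδ : 0 ≤ δ) (hδ1 : δ ≤ 1) :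
    (Measure.pi fun _ : Fin r => μ).real
      {ω | (1 + δ) * (r * μ.real {x | A x}) ≤ ((Finset.univ.filter fun i => A (ω i)).card : ℝ)}
      ≤ Real.exp (-(δ ^ 2 * (r * μ.real {x | A x}) / 4)) := by
  set m := r * μ.real {x | A x} with hm
  have hm0 : 0 ≤ m := by positivity
  have h := ProbabilityTheory.measure_ge_le_exp_mul_mgf (μ := Measure.pi fun _ : Fin r => μ)
    (X := fun ω : Fin r → α => ((Finset.univ.filter fun i => A (ω i)).card : ℝ))
    ((1 + δ) * m) (t := δ / 2) (by linarith) Integrable.of_finite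
  refine h.trans ?_
  refine (mul_le_mul_of_nonneg_left (binom_mgf μ A r (δ/2)) (Real.exp_pos _).le).trans ?_
  rw [← Real.exp_add]
  apply Real.exp_le_exp.2
  rw [← hm]
  have h5 := (abs_le.1 (Real.abs_exp_sub_one_sub_id_le (x := δ / 2)
    (by rw [abs_of_nonneg] <;> linarith))).2
  nlinarith

lemma binom_lower (δ : ℝ) (hδ : 0 ≤ δ) (hδ1 : δ ≤ 1) :
    (Measure.pi fun _ : Fin r => μ).real
      {ω | ((Finset.univ.filter fun i => A (ω i)).card : ℝ) ≤ (1 - δ) * (r * μ.real {x | A x})}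
      ≤ Real.exp (-(δ ^ 2 * (r * μ.real {x | A x}) / 4)) := by
  set m := r * μ.real {x | A x} with hm
  have hm0 : 0 ≤ m := by positivity
  have h := ProbabilityTheory.measure_le_le_exp_mul_mgf (μ := Measure.pi fun _ : Fin r => μ)
    (X := fun ω : Fin r → α => ((Finset.univ.filter fun i => A (ω i)).card : ℝ))
    ((1 - δ) * m) (t := -(δ / 2)) (by linarith) Integrable.of_finite
  refine h.trans ?_
  refine (mul_le_mul_of_nonneg_left (binom_mgf μ A r (-(δ/2))) (Real.exp_pos _).le).trans ?_
  rw [← Real.exp_add]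
  apply Real.exp_le_exp.2
  rw [← hm]
  have h5 := (abs_le.1 (Real.abs_exp_sub_one_sub_id_le (x := -(δ / 2))
    (by rw [abs_neg, abs_of_nonneg] <;> linarith))).2
  nlinarith
end binom

section hoeff
variable {ι α β : Type*} [Fintype ι] [DecidableEq ι] [Finite α] [MeasurableSpace α]
  [DiscreteMeasurableSpace α]
  (μ : Measure α) [IsProbabilityMeasure μ]

lemma disj_indep (C : ι → Set α) (S : β → Finset ι)
    (hS : ∀ b b', b ≠ b' → Disjoint (S b) (S b')) :
    ProbabilityTheory.iIndepSet (fun b => ((S b : Set ι).pi C)) (Measure.pi fun _ : ι => μ) := by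
  rw [ProbabilityTheory.iIndepSet_iff_meas_biInter (fun _ => MeasurableSet.of_discrete)]
  intro s
  have : (⋂ b ∈ s, ((S b : Set ι).pi C)) = ((s.biUnion S : Finset ι) : Set ι).pi C := by
    ext ρ
    simp only [Set.mem_iInter, Set.mem_pi, Finset.mem_coe, Finset.mem_biUnion]
    constructor
    · rintro h i ⟨b, hb, hi⟩; exact h b hb i hi
    · intro h b hb i hi; exact h i ⟨b, hb, hi⟩
  rw [this, Measure.pi_pi_finset, Finset.prod_biUnion (fun b _ b' _ h => hS b b' h)]
  simp_rw [Measure.pi_pi_finset]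

lemma ind_subG (P : Measure (ι → α)) [IsProbabilityMeasure P] (A : Set (ι → α)) :
    ProbabilityTheory.HasSubgaussianMGF
      (fun ω => A.indicator (fun _ => (1:ℝ)) ω - P.real A) (1/4) P := by
  have h := ProbabilityTheory.hasSubgaussianMGF_of_mem_Icc (μ := P)
    (X := A.indicator (fun _ => (1:ℝ))) (a := 0) (b := 1)
    Measurable.of_discrete.aemeasurable (ae_of_all _ fun ω => by
      by_cases h : ω ∈ A <;> simp [h])
  have e : ∫ x, A.indicator (fun _ => (1:ℝ)) x ∂P = P.real A := by
    rw [integral_indicator MeasurableSet.of_discrete]; simp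
  rw [e] at h
  convert h using 1
  simp; norm_num

open scoped Classical in
lemma disj_upper (C : ι → Set α) (S : β → Finset ι)
    (hS : ∀ b b', b ≠ b' → Disjoint (S b) (S b')) (B : Finset β) (s : ℝ) (hs : 0 ≤ s) :
    (Measure.pi fun _ : ι => μ).real
      {ρ | (∑ b ∈ B, ∏ E ∈ S b, μ.real (C E)) + s
        ≤ ((B.filter fun b => ∀ E ∈ S b, ρ E ∈ C E).card : ℝ)}
      ≤ Real.exp (-(2 * s ^ 2 / B.card)) := by
  set P := Measure.pi fun _ : ι => μ with hP
  set A : β → Set (ι → α) := fun b => ((S b : Set ι).pi C) with hA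
  have hi := (disj_indep μ C S hS).iIndepFun_indicator (β := ℝ) (m := Real.measurableSpace)
  have hi2 := hi.comp (fun b x => x - P.real (A b)) (fun b => by fun_prop)
  have h := ProbabilityTheory.HasSubgaussianMGF.measure_sum_ge_le_of_iIndepFun hi2 (s := B)
    (c := fun _ => 1/4) (fun b _ => ind_subG P (A b)) hs
  have hPA : ∀ b, P.real (A b) = ∏ E ∈ S b, μ.real (C E) := by
    intro b
    simp only [Measure.real, hA, hP, Measure.pi_pi_finset, ENNReal.toReal_prod]
  refine le_trans (le_of_eq ?_) (h.trans (le_of_eq ?_))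
  · congr 1
    ext ρ
    simp only [Set.mem_setOf_eq, Function.comp_apply, Finset.sum_sub_distrib, hPA]
    have : ∑ b ∈ B, (A b).indicator (fun _ => (1:ℝ)) ρ
      = ((B.filter fun b => ∀ E ∈ S b, ρ E ∈ C E).card : ℝ) := by
      rw [Finset.card_filter]; push_cast
      refine Finset.sum_congr rfl fun b _ => ?_
      simp [Set.indicator_apply, hA, Set.mem_pi]
    rw [this]
    constructor <;> intro h <;> linarith
  · congr 1
    simp
    rcases eq_or_ne (B.card : ℝ) 0 with h0 | h0
    · simp [h0]
    · field_simp; norm_num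

open scoped Classical in
lemma disj_lower (C : ι → Set α) (S : β → Finset ι)
    (hS : ∀ b b', b ≠ b' → Disjoint (S b) (S b')) (B : Finset β) (s : ℝ) (hs : 0 ≤ s) :
    (Measure.pi fun _ : ι => μ).real
      {ρ | ((B.filter fun b => ∀ E ∈ S b, ρ E ∈ C E).card : ℝ) ≤ 
        (∑ b ∈ B, ∏ E ∈ S b, μ.real (C E)) - s}
      ≤ Real.exp (-(2 * s ^ 2 / B.card)) := by
  set P := Measure.pi fun _ : ι => μ with hP
  set A : β → Set (ι → α) := fun b => ((S b : Set ι).pi C) with hA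
  have hi := (disj_indep μ C S hS).iIndepFun_indicator (β := ℝ) (m := Real.measurableSpace)
  have hi2 := hi.comp (fun b x => -(x - P.real (A b))) (fun b => by fun_prop)
  have h := ProbabilityTheory.HasSubgaussianMGF.measure_sum_ge_le_of_iIndepFun hi2 (s := B)
    (c := fun _ => 1/4) (fun b _ => (ind_subG P (A b)).neg) hs
  have hPA : ∀ b, P.real (A b) = ∏ E ∈ S b, μ.real (C E) := by
    intro b
    simp only [Measure.real, hA, hP, Measure.pi_pi_finset, ENNReal.toReal_prod]
  refine le_trans (le_of_eq ?_) (h.trans (le_of_eq ?_))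
  · congr 1
    ext ρ
    simp only [Set.mem_setOf_eq, Function.comp_apply, Finset.sum_neg_distrib, Finset.sum_sub_distrib, hPA]
    have : ∑ b ∈ B, (A b).indicator (fun _ => (1:ℝ)) ρ
      = ((B.filter fun b => ∀ E ∈ S b, ρ E ∈ C E).card : ℝ) := by
      rw [Finset.card_filter]; push_cast
      refine Finset.sum_congr rfl fun b _ => ?_
      simp [Set.indicator_apply, hA, Set.mem_pi]
    rw [this]
    constructor <;> intro h <;> linarith
  · congr 1
    simp
    rcases eq_or_ne (B.card : ℝ) 0 with h0 | h0
    · simp [h0]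
    · field_simp; norm_num

lemma exp_card_mono (B : Finset β) (hB : 0 < B.card) (s ν : ℝ) (hν : (B.card : ℝ) ≤ ν) :
    Real.exp (-(2 * s ^ 2 / B.card)) ≤ Real.exp (-(2 * s ^ 2 / ν)) := by
  apply Real.exp_le_exp.2
  apply neg_le_neg
  apply div_le_div_of_nonneg_left (by positivity) (by exact_mod_cast hB) hν

open scoped Classical in
lemma disj_upper' (C : ι → Set α) (S : β → Finset ι)
    (hS : ∀ b b', b ≠ b' → Disjoint (S b) (S b')) (B : Finset β) (s : ℝ) (hs : 0 < s)
    (ν : ℝ) (hν : (B.card : ℝ) ≤ ν) :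
    (Measure.pi fun _ : ι => μ).real
      {ρ | (∑ b ∈ B, ∏ E ∈ S b, μ.real (C E)) + s
        ≤ ((B.filter fun b => ∀ E ∈ S b, ρ E ∈ C E).card : ℝ)}
      ≤ Real.exp (-(2 * s ^ 2 / ν)) := by
  rcases B.eq_empty_or_nonempty with rfl | hB
  · have : ¬ (s ≤ 0) := not_le.2 hs
    simp [this]
    positivity
  · exact (disj_upper μ C S hS B s hs.le).trans (exp_card_mono B (Finset.card_pos.2 hB) s ν hν)

open scoped Classical in
lemma disj_lower' (C : ι → Set α) (S : β → Finset ι)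
    (hS : ∀ b b', b ≠ b' → Disjoint (S b) (S b')) (B : Finset β) (s : ℝ) (hs : 0 < s)
    (ν : ℝ) (hν : (B.card : ℝ) ≤ ν) :
    (Measure.pi fun _ : ι => μ).real
      {ρ | ((B.filter fun b => ∀ E ∈ S b, ρ E ∈ C E).card : ℝ) ≤
        (∑ b ∈ B, ∏ E ∈ S b, μ.real (C E)) - s}
      ≤ Real.exp (-(2 * s ^ 2 / ν)) := by
  rcases B.eq_empty_or_nonempty with rfl | hB
  · have : ¬ (s ≤ 0) := not_le.2 hs
    simp [this]
    positivity
  · exact (disj_lower μ C S hS B s hs.le).trans (exp_card_mono B (Finset.card_pos.2 hB) s ν hν)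
end hoeff

lemma real_union_bound {Ω β : Type*} [MeasurableSpace Ω] (P : Measure Ω) [IsFiniteMeasure P]
    (s : Finset β) (A : β → Set Ω) (e : ℝ) (h : ∀ b ∈ s, P.real (A b) ≤ e) :
    P.real (⋃ b ∈ s, A b) ≤ s.card * e := by
  refine (measureReal_biUnion_finset_le s A).trans ?_
  refine (Finset.sum_le_sum h).trans (le_of_eq ?_)
  simp

lemma hNbhd_mem (n k : ℕ) (H : Finset (Finset (Fin n))) (S Y : Finset (Fin n)) :
    Y ∈ hNbhd n k H S ↔ Y.card = k - S.card ∧ S ∪ Y ∈ H := by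
  simp [hNbhd]

lemma side_bad (n k j s s' : ℕ) (hn : 0 < n) (hss : s + s' = k) (H : Finset (Finset (Fin n)))
    (T : Fin j → Finset (Fin n)) (hT : ∀ b b', b ≠ b' → Disjoint (T b) (T b'))
    (hTs : ∀ b, (T b).card = s') (hs'n : s' ≤ n) (ε p : ℝ) (hε : 0 < ε) (hε1 : ε ≤ 1) (hp : 0 < p) (hp1 : p ≤ 1)
    (hj : 0 < j)
    (hdeg : ∀ S : Finset (Fin n), S.card = s → (1 - ε) * ((n - s).choose s' : ℝ) * p ≤ hDeg n k H S)
    (hcod : ∀ S₁ S₂ : Finset (Fin n), S₁.card = s → S₂.card = s → Disjoint S₁ S₂ →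
      ((hNbhd n k H S₁ ∩ hNbhd n k H S₂).card : ℝ) ≤ (1 + ε) * ((n - 2 * s).choose s' : ℝ) * p ^ 2)
    (hratio : (1 - ε / 8) * (n.choose s' : ℝ) ≤ ((n - s).choose s' : ℝ)) :
    (uniformM (Equiv.Perm (Fin n))).real
      {π | ¬ ((∀ S : Finset (Fin n), S.card = s →
          (1 - 3 / 2 * ε) * j * p ≤ famCount T (hNbhd n k H S) π) ∧
        (∀ S₁ S₂ : Finset (Fin n), S₁.card = s → S₂.card = s → Disjoint S₁ S₂ →
          (famCount T (hNbhd n k H S₁ ∩ hNbhd n k H S₂) π : ℝ) ≤ (1 + 5 / 4 * ε) * j * p ^ 2))}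
      ≤ 2 * (n:ℝ) ^ (2 * k) * Real.exp (-((ε / 4 * j * p ^ 2) ^ 2 / (32 * n))) := by
  classical
  set t : ℝ := ε / 4 * j * p ^ 2 with ht
  set e := Real.exp (-(t ^ 2 / (32 * n))) with he
  have hj0 : (0:ℝ) < j := by exact_mod_cast hj
  have ht0 : 0 ≤ t := by positivity
  have hC : (0:ℝ) < (n.choose s' : ℝ) := by exact_mod_cast Nat.choose_pos hs'n
  set PS := Finset.powersetCard s (Finset.univ : Finset (Fin n)) with hPS
  have hPSc : (PS.card : ℝ) ≤ (n:ℝ) ^ k := by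
    rw [hPS, Finset.card_powersetCard, Finset.card_univ, Fintype.card_fin]
    calc ((n.choose s : ℕ) : ℝ) ≤ (n:ℝ) ^ s := by exact_mod_cast Nat.choose_le_pow n s
      _ ≤ (n:ℝ) ^ k := pow_le_pow_right₀ (by exact_mod_cast hn) (by omega)
  have hF : ∀ S : Finset (Fin n), S.card = s → ∀ Y ∈ hNbhd n k H S, Y.card = s' := by
    intro S hS Y hY
    rw [hNbhd_mem] at hY
    rw [hY.1, hS]; omega
  set μ := uniformM (Equiv.Perm (Fin n))
  set A : Finset (Fin n) → Set (Equiv.Perm (Fin n)) := fun S =>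
    {π | (famCount T (hNbhd n k H S) π : ℝ) ≤ (j * (hNbhd n k H S).card / (n.choose s' : ℝ)) - t}
  set B : Finset (Fin n) × Finset (Fin n) → Set (Equiv.Perm (Fin n)) := fun S =>
    {π | (j * (hNbhd n k H S.1 ∩ hNbhd n k H S.2).card / (n.choose s' : ℝ)) + t
      ≤ famCount T (hNbhd n k H S.1 ∩ hNbhd n k H S.2) π}
  have hA : ∀ S ∈ PS, μ.real (A S) ≤ e := fun S hS =>
    famCount_lower T _ hn hT s' hTs (hF S (Finset.mem_powersetCard.1 hS).2) t ht0
  have hB : ∀ S ∈ PS ×ˢ PS, μ.real (B S) ≤ e := fun S hS =>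
    famCount_upper T _ hn hT s' hTs
      (fun Y hY => hF S.1 (Finset.mem_powersetCard.1 (Finset.mem_product.1 hS).1).2 Y
        (Finset.mem_inter.1 hY).1) t ht0
  have hsub : {π | ¬ ((∀ S : Finset (Fin n), S.card = s →
          (1 - 3 / 2 * ε) * j * p ≤ famCount T (hNbhd n k H S) π) ∧
        (∀ S₁ S₂ : Finset (Fin n), S₁.card = s → S₂.card = s → Disjoint S₁ S₂ →
          (famCount T (hNbhd n k H S₁ ∩ hNbhd n k H S₂) π : ℝ) ≤ (1 + 5 / 4 * ε) * j * p ^ 2))}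
      ⊆ (⋃ S ∈ PS, A S) ∪ (⋃ S ∈ PS ×ˢ PS, B S) := by
    intro π hπ
    by_contra hcon
    rw [Set.mem_union, not_or] at hcon
    simp only [Set.mem_iUnion, not_exists] at hcon
    apply hπ
    constructor
    · intro S hS
      have h1 := hcon.1 S (Finset.mem_powersetCard.2 ⟨Finset.subset_univ _, hS⟩)
      have h1 : ¬ ((famCount T (hNbhd n k H S) π : ℝ) ≤ (j * (hNbhd n k H S).card / (n.choose s' : ℝ)) - t) := h1
      rw [not_le] at h1
      refine le_trans ?_ h1.le
      have h2 := hdeg S hS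
      unfold hDeg at h2
      have h3 : (1 - ε) * (1 - ε/8) * p ≤ (hNbhd n k H S).card / (n.choose s' : ℝ) := by
        rw [le_div_iff₀ hC]
        refine le_trans ?_ h2
        have := mul_le_mul_of_nonneg_left hratio (mul_nonneg (by linarith : 0 ≤ 1 - ε) hp.le)
        nlinarith
      have h4 := mul_le_mul_of_nonneg_left h3 hj0.le
      rw [mul_div_assoc]
      have h5 : t ≤ ε / 4 * j * p := by
        rw [ht]; apply mul_le_mul_of_nonneg_left _ (by positivity); nlinarith
      have h6 : 0 ≤ ε * j * p := by positivity
      have h7 : 0 ≤ ε^2 * j * p := by positivity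
      nlinarith
    · intro S₁ S₂ hS₁ hS₂ hd
      have h1 := hcon.2 (S₁, S₂) (Finset.mem_product.2 ⟨Finset.mem_powersetCard.2 ⟨Finset.subset_univ _, hS₁⟩,
        Finset.mem_powersetCard.2 ⟨Finset.subset_univ _, hS₂⟩⟩)
      have h1 : ¬ ((j * (hNbhd n k H S₁ ∩ hNbhd n k H S₂).card / (n.choose s' : ℝ)) + t
        ≤ famCount T (hNbhd n k H S₁ ∩ hNbhd n k H S₂) π) := h1
      rw [not_le] at h1
      refine h1.le.trans ?_
      have h2 := hcod S₁ S₂ hS₁ hS₂ hd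
      have h3 : ((hNbhd n k H S₁ ∩ hNbhd n k H S₂).card : ℝ) / (n.choose s' : ℝ) ≤ (1 + ε) * p ^ 2 := by
        rw [div_le_iff₀ hC]
        refine h2.trans ?_
        have h8 : ((n - 2 * s).choose s' : ℝ) ≤ (n.choose s' : ℝ) := by
          exact_mod_cast Nat.choose_le_choose _ (by omega)
        have := mul_le_mul_of_nonneg_left h8 (mul_nonneg (by linarith : 0 ≤ 1 + ε) (sq_nonneg p))
        nlinarith
      have h4 := mul_le_mul_of_nonneg_left h3 hj0.le
      rw [mul_div_assoc, ht]
      nlinarith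
  refine (measureReal_mono hsub).trans ((measureReal_union_le _ _).trans ?_)
  have h1 := real_union_bound μ PS A e hA
  have h2 := real_union_bound μ (PS ×ˢ PS) B e hB
  have he0 : 0 < e := Real.exp_pos _
  have hn1 : (1:ℝ) ≤ n := by exact_mod_cast hn
  have h3 : (PS.card : ℝ) ≤ (n:ℝ) ^ (2 * k) := hPSc.trans (pow_le_pow_right₀ hn1 (by omega))
  have h4 : ((PS ×ˢ PS).card : ℝ) ≤ (n:ℝ) ^ (2 * k) := by
    rw [Finset.card_product, two_mul, pow_add]; push_cast
    exact mul_le_mul hPSc hPSc (by positivity) (by positivity)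
  have h5 := mul_le_mul_of_nonneg_right h3 he0.le
  have h6 := mul_le_mul_of_nonneg_right h4 he0.le
  linarith

lemma freq_bad (k j r : ℕ) (hk : 2 ≤ k) (δ : ℝ) (hδ : 0 ≤ δ) (hδ1 : δ ≤ 1) (m : ℝ)
    (hm : m = r * ((j : ℝ) ^ 2 / ((k * j).choose k : ℝ))) :
    (Measure.pi fun _ : Fin r => uniformM (Equiv.Perm (Fin (k * j)))).real
      {πs | ¬ ∀ E : Finset (Fin (k * j)), E.card = k → ∀ I : Finset (Fin r),
        (∀ i, i ∈ I ↔ includesPairXY (k * j) k j (πs i) E) →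
          (1 - δ) * m ≤ I.card ∧ (I.card : ℝ) ≤ (1 + δ) * m}
      ≤ 2 * ((k * j : ℕ) : ℝ) ^ k * Real.exp (-(δ ^ 2 * m / 4)) := by
  classical
  set P := (Measure.pi fun _ : Fin r => uniformM (Equiv.Perm (Fin (k * j))))
  set e := Real.exp (-(δ ^ 2 * m / 4)) with he
  set PS := Finset.powersetCard k (Finset.univ : Finset (Fin (k * j))) with hPS
  have hPSc : (PS.card : ℝ) ≤ ((k * j : ℕ) : ℝ) ^ k := by
    rw [hPS, Finset.card_powersetCard, Finset.card_univ, Fintype.card_fin]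
    exact_mod_cast Nat.choose_le_pow (k * j) k
  set A : Finset (Fin (k * j)) → Set (Fin r → Equiv.Perm (Fin (k * j))) := fun E =>
    {πs | ((Finset.univ.filter fun i => includesPairXY (k * j) k j (πs i) E).card : ℝ) ≤ (1 - δ) * m}
  set B : Finset (Fin (k * j)) → Set (Fin r → Equiv.Perm (Fin (k * j))) := fun E =>
    {πs | (1 + δ) * m ≤ ((Finset.univ.filter fun i => includesPairXY (k * j) k j (πs i) E).card : ℝ)}
  have hA : ∀ E ∈ PS, P.real (A E) ≤ e := by
    intro E hE
    have := binom_lower (uniformM (Equiv.Perm (Fin (k * j)))) (fun π => includesPairXY (k * j) k j π E)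
      r δ hδ hδ1
    rw [includes_prob k j hk E (Finset.mem_powersetCard.1 hE).2, ← hm] at this
    exact this
  have hB : ∀ E ∈ PS, P.real (B E) ≤ e := by
    intro E hE
    have := binom_upper (uniformM (Equiv.Perm (Fin (k * j)))) (fun π => includesPairXY (k * j) k j π E)
      r δ hδ hδ1
    rw [includes_prob k j hk E (Finset.mem_powersetCard.1 hE).2, ← hm] at this
    exact this
  have hsub : {πs : Fin r → Equiv.Perm (Fin (k * j)) | ¬ ∀ E : Finset (Fin (k * j)), E.card = k → ∀ I : Finset (Fin r),
        (∀ i, i ∈ I ↔ includesPairXY (k * j) k j (πs i) E) →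
          (1 - δ) * m ≤ I.card ∧ (I.card : ℝ) ≤ (1 + δ) * m}
      ⊆ (⋃ S ∈ PS, A S) ∪ (⋃ S ∈ PS, B S) := by
    intro πs hπ
    by_contra hcon
    rw [Set.mem_union, not_or] at hcon
    simp only [Set.mem_iUnion, not_exists] at hcon
    apply hπ
    intro E hE I hI
    have hIe : I = Finset.univ.filter fun i => includesPairXY (k * j) k j (πs i) E := by
      ext i; simp [hI i]
    have hm : E ∈ PS := Finset.mem_powersetCard.2 ⟨Finset.subset_univ _, hE⟩
    have h1 : ¬ (((Finset.univ.filter fun i => includesPairXY (k * j) k j (πs i) E).card : ℝ) ≤ (1 - δ) * m) := hcon.1 E hm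
    have h2 : ¬ ((1 + δ) * m ≤ ((Finset.univ.filter fun i => includesPairXY (k * j) k j (πs i) E).card : ℝ)) := hcon.2 E hm
    rw [hIe]
    exact ⟨(not_le.1 h1).le, (not_le.1 h2).le⟩
  refine (measureReal_mono hsub).trans ((measureReal_union_le _ _).trans ?_)
  have h1 := real_union_bound P PS A e hA
  have h2 := real_union_bound P PS B e hB
  have h5 := mul_le_mul_of_nonneg_right hPSc (Real.exp_pos (-(δ ^ 2 * m / 4))).le
  linarith

open scoped Classical in
lemma lab_side (n j r : ℕ) (hj : 0 < j) (I : Finset (Fin n) → Finset (Fin r)) (i : Fin r)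
    (Q : Fin j → Fin j → Finset (Fin n))
    (hinj : ∀ a b a' b', Q a b = Q a' b' → a = a' ∧ b = b')
    (hi : ∀ a b, i ∈ I (Q a b)) (H : Finset (Finset (Fin n)))
    (ε p f₀ p₀ : ℝ) (hε : 0 < ε) (hε1 : ε ≤ 1 / 100) (hp : 0 < p) (hf₀ : 0 < f₀)
    (hp₀ : p₀ = p / f₀) (hp₀1 : p₀ ≤ 1)
    (hf : ∀ a b, ((I (Q a b)).card : ℝ) ≤ f₀ ∧ (1 - 13 / 10 * ε) * f₀ ≤ (I (Q a b)).card)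
    (hdeg : ∀ a, (1 - 3 / 2 * ε) * j * p ≤ ((Finset.univ.filter fun b => Q a b ∈ H).card : ℝ))
    (hcod : ∀ a₁ a₂, a₁ ≠ a₂ → ((Finset.univ.filter fun b => Q a₁ b ∈ H ∧ Q a₂ b ∈ H).card : ℝ)
      ≤ (1 + 5 / 4 * ε) * j * p ^ 2) :
    (Measure.pi fun _ : Finset (Fin n) => uniformM (Equiv.Perm (Fin r))).real
      {ρs | ¬ ((∀ a, (1 - 2 * ε) * j * p₀ ≤ ((Finset.univ.filter fun b => Q a b ∈ H ∧
          pickUniform (ρs (Q a b)) (I (Q a b)) = some i).card : ℝ)) ∧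
        (∀ a₁ a₂, a₁ ≠ a₂ → ((Finset.univ.filter fun b => (Q a₁ b ∈ H ∧
          pickUniform (ρs (Q a₁ b)) (I (Q a₁ b)) = some i) ∧ (Q a₂ b ∈ H ∧
          pickUniform (ρs (Q a₂ b)) (I (Q a₂ b)) = some i)).card : ℝ)
          ≤ (1 + 5 * ε) * j * p₀ ^ 2))}
      ≤ 2 * (j : ℝ) ^ 2 * Real.exp (-(2 * (ε / 2 * j * p₀ ^ 2) ^ 2 / j)) := by
  set P := Measure.pi fun _ : Finset (Fin n) => uniformM (Equiv.Perm (Fin r))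
  set μ := uniformM (Equiv.Perm (Fin r))
  set s : ℝ := ε / 2 * j * p₀ ^ 2 with hs
  set e := Real.exp (-(2 * s ^ 2 / j)) with he
  have hj0 : (0:ℝ) < j := by exact_mod_cast hj
  have hp₀0 : 0 < p₀ := by rw [hp₀]; positivity
  have hs0 : 0 < s := by positivity
  obtain ⟨C, hCd⟩ : ∃ C : Finset (Fin n) → Set (Equiv.Perm (Fin r)),
      ∀ E, C E = {ρ | pickUniform ρ (I E) = some i} := ⟨_, fun _ => rfl⟩
  have hCm : ∀ E ρ, ρ ∈ C E ↔ pickUniform ρ (I E) = some i := fun E ρ => by rw [hCd]; rfl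
  have hC : ∀ a b, μ.real (C (Q a b)) = 1 / ((I (Q a b)).card : ℝ) := fun a b => by
    rw [hCd]; exact pick_prob (I (Q a b)) i (hi a b)
  have hcp : ∀ a b, (0:ℝ) < (I (Q a b)).card := fun a b => by
    exact_mod_cast Finset.card_pos.2 ⟨i, hi a b⟩
  have hClo : ∀ a b, 1 / f₀ ≤ μ.real (C (Q a b)) := by
    intro a b; rw [hC]
    exact one_div_le_one_div_of_le (hcp a b) (hf a b).1
  have hq : 0 < (1 - 13 / 10 * ε) * f₀ := mul_pos (by linarith) hf₀
  have hChi : ∀ a b, μ.real (C (Q a b)) ≤ 1 / ((1 - 13 / 10 * ε) * f₀) := by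
    intro a b; rw [hC]
    exact one_div_le_one_div_of_le hq (hf a b).2
  set B1 : Fin j → Finset (Fin j) := fun a => Finset.univ.filter fun b => Q a b ∈ H
  set B2 : Fin j × Fin j → Finset (Fin j) := fun a =>
    Finset.univ.filter fun b => Q a.1 b ∈ H ∧ Q a.2 b ∈ H
  set S1 : Fin j → Fin j → Finset (Finset (Fin n)) := fun a b => {Q a b}
  set S2 : Fin j × Fin j → Fin j → Finset (Finset (Fin n)) := fun a b => {Q a.1 b, Q a.2 b}
  have hS1 : ∀ a b b', b ≠ b' → Disjoint (S1 a b) (S1 a b') := by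
    intro a b b' hne
    simp only [S1, Finset.disjoint_singleton]
    intro h; exact hne (hinj _ _ _ _ h).2
  have hS2 : ∀ a b b', b ≠ b' → Disjoint (S2 a b) (S2 a b') := by
    intro a b b' hne
    rw [Finset.disjoint_left]
    intro E h h'
    simp only [S2, Finset.mem_insert, Finset.mem_singleton] at h h'
    rcases h with rfl | rfl <;> rcases h' with h' | h' <;> exact hne (hinj _ _ _ _ h').2
  have hBc : ∀ B : Finset (Fin j), (B.card : ℝ) ≤ j := by
    intro B
    have := Finset.card_le_univ B
    rw [Fintype.card_fin] at this
    exact_mod_cast this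
  set A1 : Fin j → Set (Finset (Fin n) → Equiv.Perm (Fin r)) := fun a =>
    {ρ | (((B1 a).filter fun b => ∀ E ∈ S1 a b, ρ E ∈ C E).card : ℝ) ≤
        (∑ b ∈ B1 a, ∏ E ∈ S1 a b, μ.real (C E)) - s}
  set A2 : Fin j × Fin j → Set (Finset (Fin n) → Equiv.Perm (Fin r)) := fun a =>
    {ρ | (∑ b ∈ B2 a, ∏ E ∈ S2 a b, μ.real (C E)) + s ≤
      (((B2 a).filter fun b => ∀ E ∈ S2 a b, ρ E ∈ C E).card : ℝ)}
  have hA1 : ∀ a ∈ (Finset.univ : Finset (Fin j)), P.real (A1 a) ≤ e := fun a _ =>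
    disj_lower' μ C (S1 a) (hS1 a) (B1 a) s hs0 j (hBc _)
  have hA2 : ∀ a ∈ (Finset.univ : Finset (Fin j × Fin j)), P.real (A2 a) ≤ e := fun a _ =>
    disj_upper' μ C (S2 a) (hS2 a) (B2 a) s hs0 j (hBc _)
  refine (measureReal_mono (s₂ := (⋃ a ∈ (Finset.univ : Finset (Fin j)), A1 a)
    ∪ (⋃ a ∈ (Finset.univ : Finset (Fin j × Fin j)), A2 a)) ?_).trans
      ((measureReal_union_le _ _).trans ?_)
  · intro ρ hρ
    by_contra hcon
    rw [Set.mem_union, not_or] at hcon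
    simp only [Set.mem_iUnion, not_exists] at hcon
    apply hρ
    constructor
    · intro a
      have h1 : ¬ ((((B1 a).filter fun b => ∀ E ∈ S1 a b, ρ E ∈ C E).card : ℝ) ≤
        (∑ b ∈ B1 a, ∏ E ∈ S1 a b, μ.real (C E)) - s) := hcon.1 a (Finset.mem_univ _)
      rw [not_le] at h1
      have h2 : ((B1 a).filter fun b => ∀ E ∈ S1 a b, ρ E ∈ C E)
        = (Finset.univ.filter fun b => Q a b ∈ H ∧
          pickUniform (ρ (Q a b)) (I (Q a b)) = some i) := by
        ext b
        simp only [B1, S1, hCm, Finset.mem_filter, Finset.mem_univ, true_and, Finset.mem_singleton,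
          forall_eq]
      rw [h2] at h1
      refine le_trans ?_ h1.le
      have h3 : (B1 a).card * (1 / f₀) ≤ ∑ b ∈ B1 a, ∏ E ∈ S1 a b, μ.real (C E) := by
        rw [← nsmul_eq_mul, ← Finset.sum_const]
        refine Finset.sum_le_sum fun b _ => ?_
        simp only [S1, Finset.prod_singleton]
        exact hClo a b
      have h4 : (1 - 3 / 2 * ε) * j * p * (1 / f₀) ≤ (B1 a).card * (1 / f₀) :=
        mul_le_mul_of_nonneg_right (hdeg a) (by positivity)
      have h5 : (1 - 3 / 2 * ε) * j * p * (1 / f₀) = (1 - 3 / 2 * ε) * j * p₀ := by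
        rw [hp₀]; ring
      have h6 : s ≤ ε / 2 * j * p₀ := by
        rw [hs]; apply mul_le_mul_of_nonneg_left _ (by positivity); nlinarith
      nlinarith
    · intro a₁ a₂ hne
      have h1 : ¬ ((∑ b ∈ B2 (a₁, a₂), ∏ E ∈ S2 (a₁, a₂) b, μ.real (C E)) + s ≤
        (((B2 (a₁, a₂)).filter fun b => ∀ E ∈ S2 (a₁, a₂) b, ρ E ∈ C E).card : ℝ)) :=
          hcon.2 (a₁, a₂) (Finset.mem_univ _)
      rw [not_le] at h1
      have h2 : ((B2 (a₁, a₂)).filter fun b => ∀ E ∈ S2 (a₁, a₂) b, ρ E ∈ C E)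
        = (Finset.univ.filter fun b => (Q a₁ b ∈ H ∧
          pickUniform (ρ (Q a₁ b)) (I (Q a₁ b)) = some i) ∧ (Q a₂ b ∈ H ∧
          pickUniform (ρ (Q a₂ b)) (I (Q a₂ b)) = some i)) := by
        ext b
        simp only [B2, S2, hCm, Finset.mem_filter, Finset.mem_univ, true_and, Finset.mem_singleton,
          forall_eq, Finset.mem_insert, forall_eq_or_imp]
        exact and_and_and_comm
      rw [h2] at h1
      refine h1.le.trans ?_
      have h3 : ∑ b ∈ B2 (a₁, a₂), ∏ E ∈ S2 (a₁, a₂) b, μ.real (C E)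
          ≤ (B2 (a₁, a₂)).card * (1 / ((1 - 13 / 10 * ε) * f₀)) ^ 2 := by
        rw [← nsmul_eq_mul, ← Finset.sum_const]
        refine Finset.sum_le_sum fun b _ => ?_
        simp only [S2]
        rw [Finset.prod_pair (fun h => hne (hinj _ _ _ _ h).1), sq]
        exact mul_le_mul (hChi _ _) (hChi _ _) measureReal_nonneg (by positivity)
      have h4 : (B2 (a₁, a₂)).card * (1 / ((1 - 13 / 10 * ε) * f₀)) ^ 2
          ≤ (1 + 5 / 4 * ε) * j * p ^ 2 * (1 / ((1 - 13 / 10 * ε) * f₀)) ^ 2 :=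
        mul_le_mul_of_nonneg_right (hcod a₁ a₂ hne) (by positivity)
      have h5 : (1 + 5 / 4 * ε) * j * p ^ 2 * (1 / ((1 - 13 / 10 * ε) * f₀)) ^ 2
          = (1 + 5 / 4 * ε) / (1 - 13 / 10 * ε) ^ 2 * (j * p₀ ^ 2) := by
        rw [hp₀]
        have : (1 - 13 / 10 * ε) ≠ 0 := by linarith
        field_simp
      have h6 : (1 + 5 / 4 * ε) / (1 - 13 / 10 * ε) ^ 2 ≤ 1 + 9 / 2 * ε := by
        have : 0 < 1 - 13 / 10 * ε := by linarith
        rw [div_le_iff₀ (by positivity)]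
        have h7 : 0 ≤ ε ^ 3 := by positivity
        have h8 : ε ^ 2 ≤ ε / 100 := by nlinarith
        nlinarith
      have h7 := mul_le_mul_of_nonneg_right h6 (by positivity : 0 ≤ j * p₀ ^ 2)
      rw [hs]
      nlinarith
  · have h1 := real_union_bound P Finset.univ A1 e hA1
    have h2 := real_union_bound P Finset.univ A2 e hA2
    rw [Finset.card_univ, Fintype.card_fin] at h1
    rw [Finset.card_univ, Fintype.card_prod, Fintype.card_fin] at h2
    push_cast at h2
    have he0 : 0 < e := Real.exp_pos _
    have : (j:ℝ) ≤ (j:ℝ) ^ 2 := by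
      have : (1:ℝ) ≤ j := by exact_mod_cast hj
      nlinarith
    nlinarith [mul_le_mul_of_nonneg_right this he0.le]

lemma prod_bound {Ω₁ Ω₂ : Type*} [MeasurableSpace Ω₁] [MeasurableSpace Ω₂]
    [DiscreteMeasurableSpace Ω₁] [DiscreteMeasurableSpace (Ω₁ × Ω₂)]
    (P₁ : Measure Ω₁) (P₂ : Measure Ω₂) [IsProbabilityMeasure P₁] [IsProbabilityMeasure P₂]
    (S : Set (Ω₁ × Ω₂)) (Z : Set Ω₁) (c : ℝ) (hc : 0 ≤ c)
    (h : ∀ x, x ∉ Z → P₂.real {y | (x, y) ∈ S} ≤ c) :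
    (P₁.prod P₂).real S ≤ P₁.real Z + c := by
  have h1 : S ⊆ (Z ×ˢ Set.univ) ∪ (S ∩ (Zᶜ ×ˢ Set.univ)) := by
    rintro ⟨x, y⟩ hx
    by_cases hz : x ∈ Z
    · exact Or.inl ⟨hz, trivial⟩
    · exact Or.inr ⟨hx, hz, trivial⟩
  refine (measureReal_mono h1).trans ((measureReal_union_le _ _).trans ?_)
  refine add_le_add (le_of_eq ?_) ?_
  · rw [measureReal_prod_prod]; simp
  · unfold Measure.real
    apply ENNReal.toReal_le_of_le_ofReal hc
    rw [Measure.prod_apply MeasurableSet.of_discrete]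
    calc ∫⁻ x, P₂ (Prod.mk x ⁻¹' (S ∩ (Zᶜ ×ˢ Set.univ))) ∂P₁ ≤ ∫⁻ x, ENNReal.ofReal c ∂P₁ := by
          apply lintegral_mono
          intro x
          by_cases hz : x ∈ Z
          · have : Prod.mk x ⁻¹' (S ∩ (Zᶜ ×ˢ Set.univ)) = ∅ := by
              ext y; simp [hz]
            simp only [this]; simp
          · refine (measure_mono (t := {y | (x, y) ∈ S}) (fun y hy => hy.1)).trans ?_
            have := h x hz
            exact (ENNReal.le_ofReal_iff_toReal_le (measure_ne_top _ _) hc).2 this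
      _ = ENNReal.ofReal c := by simp

lemma pi_coord {α : Type*} [MeasurableSpace α] [DiscreteMeasurableSpace α] (μ : Measure α)
    [IsProbabilityMeasure μ] (r : ℕ) (i : Fin r) (A : Set α) :
    (Measure.pi fun _ : Fin r => μ).real {ω | ω i ∈ A} = μ.real A := by
  unfold Measure.real
  congr 1
  exact (measurePreserving_eval (fun _ : Fin r => μ) i).measure_preimage
    (MeasurableSet.of_discrete (s := A)).nullMeasurableSet

/-- good permutations for one side -/
def sideGood (n k j s : ℕ) (H : Finset (Finset (Fin n))) (T : Fin j → Finset (Fin n)) (ε p : ℝ)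
    (π : Equiv.Perm (Fin n)) : Prop :=
  (∀ S : Finset (Fin n), S.card = s →
          (1 - 3 / 2 * ε) * j * p ≤ famCount T (hNbhd n k H S) π) ∧
        (∀ S₁ S₂ : Finset (Fin n), S₁.card = s → S₂.card = s → Disjoint S₁ S₂ →
          (famCount T (hNbhd n k H S₁ ∩ hNbhd n k H S₂) π : ℝ) ≤ (1 + 5 / 4 * ε) * j * p ^ 2)

/-- X positions -/
def TX (k j : ℕ) (a : Fin j) : Finset (Fin (k * j)) := posBlock (k * j) ((a : ℕ) * (k / 2)) (k / 2)
/-- Y positions -/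
def TY (k j : ℕ) (b : Fin j) : Finset (Fin (k * j)) :=
  posBlock (k * j) ((k / 2) * j + (b : ℕ) * (k - k / 2)) (k - k / 2)

lemma pair_TXY (k j : ℕ) (π : Equiv.Perm (Fin (k * j))) (a b : Fin j) :
    pairOf (k * j) k j π a b = (TX k j a).map π.toEmbedding ∪ (TY k j b).map π.toEmbedding := by
  rw [pairOf_eq, posPair, Finset.map_union]; rfl

lemma mem_nbhd_X (k j : ℕ) (H : Finset (Finset (Fin (k * j)))) (π : Equiv.Perm (Fin (k * j)))
    (a b : Fin j) : (TY k j b).map π.toEmbedding ∈ hNbhd (k * j) k H ((TX k j a).map π.toEmbedding)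
      ↔ pairOf (k * j) k j π a b ∈ H := by
  rw [hNbhd_mem, pair_TXY, Finset.card_map, Finset.card_map, TX, TY, posX_card, posY_card]
  simp

lemma mem_nbhd_Y (k j : ℕ) (H : Finset (Finset (Fin (k * j)))) (π : Equiv.Perm (Fin (k * j)))
    (a b : Fin j) : (TX k j a).map π.toEmbedding ∈ hNbhd (k * j) k H ((TY k j b).map π.toEmbedding)
      ↔ pairOf (k * j) k j π a b ∈ H := by
  rw [hNbhd_mem, pair_TXY, Finset.card_map, Finset.card_map, TX, TY, posX_card, posY_card,
    Finset.union_comm]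
  have : k / 2 = k - (k - k / 2) := by omega
  simp [← this]

lemma m_bounds (ε f₀ C J : ℝ) (r : ℕ) (hε : 0 < ε) (hε1 : ε ≤ 1 / 100) (hf : 100 ≤ ε * f₀)
    (hC : 0 < C) (hJ : 0 < J) (hq : J / C ≤ 1) (hr : r = Nat.floor ((1 - ε) * C * f₀ / J)) :
    (1 + ε / 4) * (r * (J / C)) ≤ f₀ ∧ (1 - 13 / 10 * ε) * f₀ ≤ (1 - ε / 4) * (r * (J / C))
      ∧ f₀ / 2 ≤ r * (J / C) := by
  have hf0 : 0 < f₀ := by by_contra h; nlinarith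
  have hq0 : 0 < J / C := by positivity
  have h0 : 0 ≤ (1 - ε) * C * f₀ / J := by
    have : 0 ≤ 1 - ε := by linarith
    positivity
  have h1 : (r : ℝ) ≤ (1 - ε) * C * f₀ / J := by rw [hr]; exact Nat.floor_le h0
  have h2 : (1 - ε) * C * f₀ / J < r + 1 := by rw [hr]; exact Nat.lt_floor_add_one _
  have e : (1 - ε) * C * f₀ / J * (J / C) = (1 - ε) * f₀ := by field_simp
  have h3 := mul_le_mul_of_nonneg_right h1 hq0.le
  have h4 := mul_le_mul_of_nonneg_right h2.le hq0.le
  rw [e] at h3 h4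
  set m := (r:ℝ) * (J / C)
  have h5 : (1 - ε) * f₀ - 1 ≤ m := by linarith
  refine ⟨?_, ?_, ?_⟩
  · nlinarith [mul_le_mul_of_nonneg_left h3 (by linarith : 0 ≤ 1 + ε / 4)]
  · nlinarith [mul_le_mul_of_nonneg_left h5 (by linarith : 0 ≤ 1 - ε / 4)]
  · nlinarith

open scoped Classical in
theorem fin_bound (k j r : ℕ) (hk : 2 ≤ k) (hj : 0 < j) (H : Finset (Finset (Fin (k * j))))
    (ε p f₀ p₀ e : ℝ) (hε : 0 < ε) (hε1 : ε ≤ 1 / 100) (hp : 0 < p) (hp1 : p ≤ 1)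
    (hf : 100 ≤ ε * f₀) (hp₀ : p₀ = p / f₀) (hp₀1 : p₀ ≤ 1)
    (hr : r = Nat.floor ((1 - ε) * ((k * j).choose k : ℝ) * f₀ / (j : ℝ) ^ 2))
    (hRa : ∀ S : Finset (Fin (k * j)), S.card = k / 2 →
      (1 - ε) * ((k * j - k / 2).choose (k - k / 2) : ℝ) * p ≤ hDeg (k * j) k H S)
    (hRb : ∀ S : Finset (Fin (k * j)), S.card = k - k / 2 →
      (1 - ε) * ((k * j - (k - k / 2)).choose (k / 2) : ℝ) * p ≤ hDeg (k * j) k H S)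
    (hRe : ∀ S₁ S₂ : Finset (Fin (k * j)), S₁.card = k / 2 → S₂.card = k / 2 → Disjoint S₁ S₂ →
      ((hNbhd (k * j) k H S₁ ∩ hNbhd (k * j) k H S₂).card : ℝ)
        ≤ (1 + ε) * ((k * j - 2 * (k / 2)).choose (k - k / 2) : ℝ) * p ^ 2)
    (hRf : ∀ S₁ S₂ : Finset (Fin (k * j)), S₁.card = k - k / 2 → S₂.card = k - k / 2 →
      Disjoint S₁ S₂ → ((hNbhd (k * j) k H S₁ ∩ hNbhd (k * j) k H S₂).card : ℝ)
        ≤ (1 + ε) * ((k * j - 2 * (k - k / 2)).choose (k / 2) : ℝ) * p ^ 2)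
    (hq1 : (1 - ε / 8) * ((k * j).choose (k - k / 2) : ℝ) ≤ ((k * j - k / 2).choose (k - k / 2) : ℝ))
    (hq2 : (1 - ε / 8) * ((k * j).choose (k / 2) : ℝ) ≤ ((k * j - (k - k / 2)).choose (k / 2) : ℝ))
    (he1 : Real.exp (-((ε / 4 * j * p ^ 2) ^ 2 / (32 * (k * j : ℕ)))) ≤ e)
    (he2 : Real.exp (-((ε / 4) ^ 2 * (f₀ / 2) / 4)) ≤ e)
    (he3 : Real.exp (-(2 * (ε / 2 * j * p₀ ^ 2) ^ 2 / j)) ≤ e) :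
    (constrMeasure2 (k * j) r).real
          {ω | ¬ ∀ i : Fin r,
            (∀ a : Fin j, (1 - 2 * ε) * (j : ℝ) * p₀ ≤
              ((Finset.univ.filter fun b : Fin j =>
                edgeP (k * j) k j r H ω i a b).card : ℝ)) ∧
            (∀ b : Fin j, (1 - 2 * ε) * (j : ℝ) * p₀ ≤
              ((Finset.univ.filter fun a : Fin j =>
                edgeP (k * j) k j r H ω i a b).card : ℝ)) ∧
            (∀ a₁ a₂ : Fin j, a₁ ≠ a₂ →
              ((Finset.univ.filter fun b : Fin j =>
                  edgeP (k * j) k j r H ω i a₁ b ∧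
                  edgeP (k * j) k j r H ω i a₂ b).card : ℝ)
                ≤ (1 + 5 * ε) * (j : ℝ) * p₀ ^ 2) ∧
            (∀ b₁ b₂ : Fin j, b₁ ≠ b₂ →
              ((Finset.univ.filter fun a : Fin j =>
                  edgeP (k * j) k j r H ω i a b₁ ∧
                  edgeP (k * j) k j r H ω i a b₂).card : ℝ)
                ≤ (1 + 5 * ε) * (j : ℝ) * p₀ ^ 2)}
    ≤ (r * (4 * ((k * j : ℕ) : ℝ) ^ (2 * k)) + 2 * ((k * j : ℕ) : ℝ) ^ k + r * (4 * (j : ℝ) ^ 2)) * e := by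
  have he0 : 0 < e := lt_of_lt_of_le (Real.exp_pos _) he1
  have hf0 : 0 < f₀ := by by_contra h; nlinarith
  have hkj : k ≤ k * j := Nat.le_mul_of_pos_right k hj
  have hn : 0 < k * j := by positivity
  have hj0 : (0:ℝ) < j := by exact_mod_cast hj
  set P₁ := (Measure.pi fun _ : Fin r => uniformM (Equiv.Perm (Fin (k * j)))) with hP₁
  set P₂ := (Measure.pi fun _ : Finset (Fin (k * j)) => uniformM (Equiv.Perm (Fin r))) with hP₂
  -- stage 1
  have hC : (0:ℝ) < ((k * j).choose k : ℝ) := by exact_mod_cast Nat.choose_pos hkj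
  have hq : (j:ℝ) ^ 2 / ((k * j).choose k : ℝ) ≤ 1 := by
    obtain ⟨E, _, hE⟩ := Finset.exists_subset_card_eq (s := (Finset.univ : Finset (Fin (k * j))))
      (n := k) (by simpa using hkj)
    rw [← includes_prob k j hk E hE]
    exact measureReal_le_one
  obtain ⟨hm1, hm2, hm3⟩ := m_bounds ε f₀ ((k * j).choose k : ℝ) ((j:ℝ) ^ 2) r hε hε1 hf hC
    (by positivity) hq hr
  set m : ℝ := r * ((j : ℝ) ^ 2 / ((k * j).choose k : ℝ)) with hm
  set Z1 : Set (Fin r → Equiv.Perm (Fin (k * j))) := ⋃ i ∈ (Finset.univ : Finset (Fin r)),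
    {πs | πs i ∈ {π | ¬ sideGood (k * j) k j (k / 2) H (TY k j) ε p π}} with hZ1
  set Z2 : Set (Fin r → Equiv.Perm (Fin (k * j))) := ⋃ i ∈ (Finset.univ : Finset (Fin r)),
    {πs | πs i ∈ {π | ¬ sideGood (k * j) k j (k - k / 2) H (TX k j) ε p π}} with hZ2
  set Z3 : Set (Fin r → Equiv.Perm (Fin (k * j))) :=
    {πs | ¬ ∀ E : Finset (Fin (k * j)), E.card = k → ∀ I : Finset (Fin r),
        (∀ i, i ∈ I ↔ includesPairXY (k * j) k j (πs i) E) →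
          (1 - ε / 4) * m ≤ I.card ∧ (I.card : ℝ) ≤ (1 + ε / 4) * m} with hZ3
  have hn2 : (0:ℝ) ≤ 2 * ((k * j : ℕ):ℝ) ^ (2 * k) := by positivity
  have b1 : P₁.real Z1 ≤ r * (2 * ((k * j : ℕ):ℝ) ^ (2 * k) * e) := by
    have := real_union_bound P₁ Finset.univ
      (fun i => {πs : Fin r → Equiv.Perm (Fin (k * j)) |
        πs i ∈ {π | ¬ sideGood (k * j) k j (k / 2) H (TY k j) ε p π}})
      (2 * ((k * j : ℕ):ℝ) ^ (2 * k) * e) (by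
        intro i _
        rw [pi_coord]
        refine (side_bad (k * j) k j (k / 2) (k - k / 2) hn (by omega) H (TY k j)
          (fun b b' h => posY_disj _ k j b b' h) (fun b => posY_card k j b) (by omega) ε p hε
          (by linarith) hp hp1 hj hRa hRe hq1).trans ?_
        exact mul_le_mul_of_nonneg_left he1 hn2)
    rw [Finset.card_univ, Fintype.card_fin] at this
    exact this
  have b2 : P₁.real Z2 ≤ r * (2 * ((k * j : ℕ):ℝ) ^ (2 * k) * e) := by
    have := real_union_bound P₁ Finset.univ
      (fun i => {πs : Fin r → Equiv.Perm (Fin (k * j)) |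
        πs i ∈ {π | ¬ sideGood (k * j) k j (k - k / 2) H (TX k j) ε p π}})
      (2 * ((k * j : ℕ):ℝ) ^ (2 * k) * e) (by
        intro i _
        rw [pi_coord]
        refine (side_bad (k * j) k j (k - k / 2) (k / 2) hn (by omega) H (TX k j)
          (fun b b' h => posX_disj _ k j b b' h) (fun b => posX_card k j b) (by omega) ε p hε
          (by linarith) hp hp1 hj hRb hRf hq2).trans ?_
        exact mul_le_mul_of_nonneg_left he1 hn2)
    rw [Finset.card_univ, Fintype.card_fin] at this
    exact this
  have b3 : P₁.real Z3 ≤ 2 * ((k * j : ℕ):ℝ) ^ k * e := by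
    refine (freq_bad k j r hk (ε / 4) (by linarith) (by linarith) m hm).trans ?_
    apply mul_le_mul_of_nonneg_left _ (by positivity)
    refine le_trans (Real.exp_le_exp.2 ?_) he2
    have := mul_le_mul_of_nonneg_left hm3 (sq_nonneg (ε / 4))
    linarith
  have bZ : P₁.real (Z1 ∪ Z2 ∪ Z3) ≤
      (r * (4 * ((k * j : ℕ) : ℝ) ^ (2 * k)) + 2 * ((k * j : ℕ) : ℝ) ^ k) * e := by
    refine (measureReal_union_le _ _).trans ?_
    have := measureReal_union_le (μ := P₁) Z1 Z2
    linarith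
  have hfin := fun (S : Set ((Fin r → Equiv.Perm (Fin (k * j))) ×
      (Finset (Fin (k * j)) → Equiv.Perm (Fin r)))) =>
    prod_bound P₁ P₂ S (Z1 ∪ Z2 ∪ Z3) (r * (4 * (j : ℝ) ^ 2) * e) (by positivity)
  unfold constrMeasure2
  refine (hfin _ ?_).trans (by linarith)
  intro πs hπs
  rw [Set.mem_union, Set.mem_union, not_or, not_or] at hπs
  obtain ⟨⟨hg1, hg2⟩, hg3⟩ := hπs
  have hg1 : ∀ i, sideGood (k * j) k j (k / 2) H (TY k j) ε p (πs i) := by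
    intro i
    by_contra h
    exact hg1 (Set.mem_biUnion (Finset.mem_coe.2 (Finset.mem_univ i)) h)
  have hg2 : ∀ i, sideGood (k * j) k j (k - k / 2) H (TX k j) ε p (πs i) := by
    intro i
    by_contra h
    exact hg2 (Set.mem_biUnion (Finset.mem_coe.2 (Finset.mem_univ i)) h)
  have hg3 : ∀ E : Finset (Fin (k * j)), E.card = k → ∀ I : Finset (Fin r),
        (∀ i, i ∈ I ↔ includesPairXY (k * j) k j (πs i) E) →
          (1 - ε / 4) * m ≤ I.card ∧ (I.card : ℝ) ≤ (1 + ε / 4) * m := by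
    by_contra h
    exact hg3 h
  obtain ⟨I, hI⟩ : ∃ I : Finset (Fin (k * j)) → Finset (Fin r),
      ∀ E, I E = Finset.univ.filter fun i => includesPairXY (k * j) k j (πs i) E :=
    ⟨_, fun _ => rfl⟩
  have hedge : ∀ ρs i a b, edgeP (k * j) k j r H (πs, ρs) i a b ↔
      pairOf (k * j) k j (πs i) a b ∈ H ∧
        pickUniform (ρs (pairOf (k * j) k j (πs i) a b)) (I (pairOf (k * j) k j (πs i) a b)) = some i := by
    intro ρs i a b
    rw [hI]
    unfold edgeP labelP
    exact Iff.rfl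
  have hcard : ∀ i a b, (pairOf (k * j) k j (πs i) a b).card = k := by
    intro i a b; rw [pairOf_eq, Finset.card_map, posPair_card]
  have hIf : ∀ i a b, ((I (pairOf (k * j) k j (πs i) a b)).card : ℝ) ≤ f₀ ∧
      (1 - 13 / 10 * ε) * f₀ ≤ (I (pairOf (k * j) k j (πs i) a b)).card := by
    intro i a b
    have := hg3 _ (hcard i a b) (I (pairOf (k * j) k j (πs i) a b)) (fun i' => by rw [hI]; simp)
    exact ⟨this.2.trans hm1, hm2.trans this.1⟩
  have hIi : ∀ i a b, i ∈ I (pairOf (k * j) k j (πs i) a b) := by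
    intro i a b
    rw [hI]; simp only [Finset.mem_filter, Finset.mem_univ, true_and]
    exact ⟨a, b, rfl⟩
  set D1 : Fin r → Set (Finset (Fin (k * j)) → Equiv.Perm (Fin r)) := fun i =>
    {ρs | ¬ ((∀ a, (1 - 2 * ε) * j * p₀ ≤ ((Finset.univ.filter fun b => pairOf (k * j) k j (πs i) a b ∈ H ∧
          pickUniform (ρs (pairOf (k * j) k j (πs i) a b)) (I (pairOf (k * j) k j (πs i) a b)) = some i).card : ℝ)) ∧
        (∀ a₁ a₂, a₁ ≠ a₂ → ((Finset.univ.filter fun b => (pairOf (k * j) k j (πs i) a₁ b ∈ H ∧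
          pickUniform (ρs (pairOf (k * j) k j (πs i) a₁ b)) (I (pairOf (k * j) k j (πs i) a₁ b)) = some i) ∧ (pairOf (k * j) k j (πs i) a₂ b ∈ H ∧
          pickUniform (ρs (pairOf (k * j) k j (πs i) a₂ b)) (I (pairOf (k * j) k j (πs i) a₂ b)) = some i)).card : ℝ)
          ≤ (1 + 5 * ε) * j * p₀ ^ 2))} with hD1
  set D2 : Fin r → Set (Finset (Fin (k * j)) → Equiv.Perm (Fin r)) := fun i =>
    {ρs | ¬ ((∀ b, (1 - 2 * ε) * j * p₀ ≤ ((Finset.univ.filter fun a => pairOf (k * j) k j (πs i) a b ∈ H ∧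
          pickUniform (ρs (pairOf (k * j) k j (πs i) a b)) (I (pairOf (k * j) k j (πs i) a b)) = some i).card : ℝ)) ∧
        (∀ b₁ b₂, b₁ ≠ b₂ → ((Finset.univ.filter fun a => (pairOf (k * j) k j (πs i) a b₁ ∈ H ∧
          pickUniform (ρs (pairOf (k * j) k j (πs i) a b₁)) (I (pairOf (k * j) k j (πs i) a b₁)) = some i) ∧ (pairOf (k * j) k j (πs i) a b₂ ∈ H ∧
          pickUniform (ρs (pairOf (k * j) k j (πs i) a b₂)) (I (pairOf (k * j) k j (πs i) a b₂)) = some i)).card : ℝ)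
          ≤ (1 + 5 * ε) * j * p₀ ^ 2))} with hD2
  have hTXd : ∀ i (a₁ a₂ : Fin j), a₁ ≠ a₂ →
      Disjoint ((TX k j a₁).map (πs i).toEmbedding) ((TX k j a₂).map (πs i).toEmbedding) :=
    fun i a₁ a₂ h => (Finset.disjoint_map _).2 (posX_disj _ k j a₁ a₂ h)
  have hTYd : ∀ i (a₁ a₂ : Fin j), a₁ ≠ a₂ →
      Disjoint ((TY k j a₁).map (πs i).toEmbedding) ((TY k j a₂).map (πs i).toEmbedding) :=
    fun i a₁ a₂ h => (Finset.disjoint_map _).2 (posY_disj _ k j a₁ a₂ h)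
  have hTXc : ∀ i (a : Fin j), ((TX k j a).map (πs i).toEmbedding).card = k / 2 := by
    intro i a; rw [Finset.card_map, TX, posX_card]
  have hTYc : ∀ i (a : Fin j), ((TY k j a).map (πs i).toEmbedding).card = k - k / 2 := by
    intro i a; rw [Finset.card_map, TY, posY_card]
  have d1 : ∀ i ∈ (Finset.univ : Finset (Fin r)), P₂.real (D1 i) ≤ 2 * (j:ℝ) ^ 2 * e := by
    intro i _
    refine (lab_side (k * j) j r hj I i (fun a b => pairOf (k * j) k j (πs i) a b)
      (fun a b a' b' h => pairOf_inj k j hk (πs i) a b a' b' h) (hIi i) H ε p f₀ p₀ hε hε1 hp hf0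
      hp₀ hp₀1 (hIf i) ?_ ?_).trans (mul_le_mul_of_nonneg_left he3 (by positivity))
    · intro a
      have := (hg1 i).1 _ (hTXc i a)
      unfold famCount at this
      simp only [mem_nbhd_X] at this
      convert this
    · intro a₁ a₂ hne
      have := (hg1 i).2 _ _ (hTXc i a₁) (hTXc i a₂) (hTXd i a₁ a₂ hne)
      unfold famCount at this
      simp only [mem_nbhd_X, Finset.mem_inter] at this
      convert this
  have d2 : ∀ i ∈ (Finset.univ : Finset (Fin r)), P₂.real (D2 i) ≤ 2 * (j:ℝ) ^ 2 * e := by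
    intro i _
    refine (lab_side (k * j) j r hj I i (fun b a => pairOf (k * j) k j (πs i) a b)
      (fun b a b' a' h => (pairOf_inj k j hk (πs i) a b a' b' h).symm) (fun b a => hIi i a b) H ε p f₀ p₀ hε hε1 hp hf0
      hp₀ hp₀1 (fun b a => hIf i a b) ?_ ?_).trans (mul_le_mul_of_nonneg_left he3 (by positivity))
    · intro a
      have := (hg2 i).1 _ (hTYc i a)
      unfold famCount at this
      simp only [mem_nbhd_Y] at this
      convert this
    · intro a₁ a₂ hne
      have := (hg2 i).2 _ _ (hTYc i a₁) (hTYc i a₂) (hTYd i a₁ a₂ hne)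
      unfold famCount at this
      simp only [mem_nbhd_Y, Finset.mem_inter] at this
      convert this
  have u1 := real_union_bound P₂ Finset.univ D1 _ d1
  have u2 := real_union_bound P₂ Finset.univ D2 _ d2
  rw [Finset.card_univ, Fintype.card_fin] at u1 u2
  refine (measureReal_mono (s₂ := (⋃ i ∈ (Finset.univ : Finset (Fin r)), D1 i)
    ∪ (⋃ i ∈ (Finset.univ : Finset (Fin r)), D2 i)) ?_).trans
      ((measureReal_union_le _ _).trans (by linarith))
  intro ρs hρ
  by_contra hcon
  rw [Set.mem_union, not_or] at hcon
  apply hρ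
  intro i
  have c1 : ρs ∉ D1 i := fun h => hcon.1 (Set.mem_biUnion (Finset.mem_coe.2 (Finset.mem_univ i)) h)
  have c2 : ρs ∉ D2 i := fun h => hcon.2 (Set.mem_biUnion (Finset.mem_coe.2 (Finset.mem_univ i)) h)
  have c1 := not_not.1 c1
  have c2 := not_not.1 c2
  simp only [hedge]
  refine ⟨?_, ?_, ?_, ?_⟩
  · intro a; convert c1.1 a
  · intro a; convert c2.1 a
  · intro a b h; convert c1.2 a b h
  · intro a b h; convert c2.2 a b h

theorem choose_sub_bound (n s t : ℕ) (hs : s ≤ n) (hn : 0 < n) :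
    (n.choose (t + 1) : ℝ) - ((n - s).choose (t + 1) : ℝ) ≤ s * ((n - 1).choose t : ℝ) := by
  induction s with
  | zero => simp
  | succ s ih =>
    have ih := ih (by omega)
    obtain ⟨m, hm⟩ : ∃ m, n - s = m + 1 := ⟨n - s - 1, by omega⟩
    have h1 : n - (s + 1) = m := by omega
    have h2 : ((m + 1).choose (t + 1) : ℝ) = m.choose t + m.choose (t + 1) := by
      rw [Nat.choose_succ_succ]; push_cast; ring
    have h3 : (m.choose t : ℝ) ≤ ((n - 1).choose t : ℝ) := by
      exact_mod_cast Nat.choose_le_choose t (by omega)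
    rw [hm, h2] at ih
    rw [h1]
    push_cast
    linarith

theorem choose_ratio (n s t : ℕ) (hs : s ≤ n) (hn : 0 < n) (δ : ℝ)
    (h : (s : ℝ) * t ≤ δ * n) :
    (1 - δ) * (n.choose t : ℝ) ≤ ((n - s).choose t : ℝ) := by
  have hn' : (0:ℝ) < n := by exact_mod_cast hn
  cases t with
  | zero =>
    simp only [Nat.choose_zero_right]
    push_cast at h ⊢
    have : 0 ≤ δ := by
      by_contra hh
      push Not at hh
      nlinarith
    linarith
  | succ t =>
    have h1 := choose_sub_bound n s t hs hn
    have h2 : (n : ℝ) * ((n - 1).choose t : ℝ) = n.choose (t + 1) * ((t + 1 : ℕ) : ℝ) := by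
      have := Nat.add_one_mul_choose_eq (n - 1) t
      rw [Nat.sub_add_cancel hn] at this
      exact_mod_cast this
    have h3 : (s : ℝ) * ((n - 1).choose t : ℝ) ≤ δ * n.choose (t + 1) := by
      have h4 : (n : ℝ) * (s * ((n - 1).choose t : ℝ)) ≤ n * (δ * n.choose (t + 1)) := by
        calc (n : ℝ) * (s * ((n - 1).choose t : ℝ)) = (s * ((t + 1 : ℕ) : ℝ)) * n.choose (t + 1) := by
              rw [mul_left_comm, h2]; ring
          _ ≤ (δ * n) * n.choose (t + 1) := mul_le_mul_of_nonneg_right h (by positivity)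
          _ = _ := by ring
      exact le_of_mul_le_mul_left h4 hn'
    linarith

set_option maxHeartbeats 1000000 in
/-- the numerical consequences of the two growth assumptions -/
theorem numerics (k j : ℕ) (hk : 2 ≤ k) (hj : 0 < j) (ε p f₀ p₀ A M L : ℝ)
    (hL : L = Real.log ((k * j : ℕ) : ℝ)) (hL1 : 1 ≤ L)
    (hA : 1 ≤ A) (hM : M = 512 * k ^ 2 * A)
    (hε : 0 < ε) (hε1 : ε ≤ 1 / 100) (hp : 0 < p) (hp1 : p ≤ 1) (hf : 0 < f₀)
    (hp₀ : p₀ = p / f₀)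
    (h1 : M * L ≤ f₀ * ε ^ 2)
    (h2 : M * (f₀ ^ 2 * L) ≤ ε * Real.sqrt ((k * j : ℕ) : ℝ) * p ^ 2) :
    100 ≤ ε * f₀ ∧ p₀ ≤ 1 ∧ f₀ ≤ ((k * j : ℕ) : ℝ) ∧ (k : ℝ) ^ 2 ≤ ε / 8 * ((k * j : ℕ) : ℝ) ∧
    A * L ≤ (ε / 4 * j * p ^ 2) ^ 2 / (32 * (k * j : ℕ)) ∧
    A * L ≤ (ε / 4) ^ 2 * (f₀ / 2) / 4 ∧
    A * L ≤ 2 * (ε / 2 * j * p₀ ^ 2) ^ 2 / j := by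
  have hk' : (2:ℝ) ≤ k := by exact_mod_cast hk
  have hj' : (1:ℝ) ≤ j := by exact_mod_cast hj
  have hnn : ((k * j : ℕ) : ℝ) = k * j := by push_cast; ring
  set n : ℝ := ((k * j : ℕ) : ℝ) with hn
  have hn1 : 1 ≤ n := by rw [hnn]; nlinarith
  set s := Real.sqrt n with hs
  have hss : s ^ 2 = n := Real.sq_sqrt (by linarith)
  have hs1 : 1 ≤ s := by rw [hs]; exact Real.one_le_sqrt.2 hn1
  have hk2 : (4:ℝ) ≤ k ^ 2 := by nlinarith
  have hkA : (k:ℝ) ^ 2 ≤ k ^ 2 * A := le_mul_of_one_le_right (by positivity) hA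
  have hA4 : 4 * A ≤ k ^ 2 * A := by nlinarith
  have hM1 : 512 * (k:ℝ) ^ 2 ≤ M := by rw [hM]; linarith
  have hM2 : 2048 * A ≤ M := by rw [hM]; linarith
  have hMpos : 0 < M := by linarith
  have hML : M ≤ M * L := le_mul_of_one_le_right hMpos.le hL1
  have hfε : M ≤ f₀ * ε ^ 2 := hML.trans h1
  have hεf : 100 ≤ ε * f₀ := by
    have : f₀ * ε ^ 2 ≤ ε * f₀ * (1 / 100) := by
      have := mul_le_mul_of_nonneg_left hε1 (mul_pos hε hf).le
      nlinarith
    linarith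
  have hf1 : 1 ≤ f₀ := by
    have : ε * f₀ ≤ f₀ := mul_le_of_le_one_left hf.le (by linarith)
    linarith
  have hf2 : 1 ≤ f₀ ^ 2 := one_le_pow₀ hf1
  have hff : f₀ ≤ f₀ ^ 2 := le_self_pow₀ hf1 (by norm_num)
  have hp2 : p ^ 2 ≤ 1 := pow_le_one₀ hp.le hp1
  have hes : ε * s * p ^ 2 ≤ ε * s := mul_le_of_le_one_right (by positivity) hp2
  have hX : M * L * f₀ ^ 2 ≤ ε * s * p ^ 2 := by linarith
  have hX1 : M * L ≤ ε * s * p ^ 2 := (le_mul_of_one_le_right (by positivity) hf2).trans hX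
  have hX2 : f₀ ^ 2 ≤ ε * s * p ^ 2 := by
    have : f₀ ^ 2 ≤ M * L * f₀ ^ 2 := le_mul_of_one_le_left (by positivity) (by linarith)
    linarith
  have hsn : s ≤ n := by
    rw [← hss]; exact le_self_pow₀ hs1 (by norm_num)
  have hεn : ε * s ≤ ε * n := mul_le_mul_of_nonneg_left hsn hε.le
  have hML2 : (M * L) * (M * L) ≥ 512 * k ^ 2 * (A * L) := by
    have : M * L * 1 ≤ (M * L) * (M * L) := by
      apply mul_le_mul_of_nonneg_left _ (by positivity)
      linarith
    rw [hM] at this ⊢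
    linarith
  have hj0 : (j:ℝ) ≠ 0 := by positivity
  have hk0 : (k:ℝ) ≠ 0 := by positivity
  have hp0s : M * L ≤ ε * s * p₀ ^ 2 := by
    have : ε * s * p₀ ^ 2 = ε * s * p ^ 2 / f₀ ^ 2 := by rw [hp₀]; ring
    rw [this, le_div_iff₀ (by positivity)]
    exact hX
  refine ⟨hεf, ?_, ?_, ?_, ?_, ?_, ?_⟩
  · rw [hp₀, div_le_one hf]; linarith
  · have : ε * n ≤ n := mul_le_of_le_one_left (by linarith) (by linarith)
    linarith
  · linarith
  · have e1 : (ε / 4 * j * p ^ 2) ^ 2 / (32 * n) = (ε * s * p ^ 2) ^ 2 / (512 * k ^ 2) := by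
      have : (ε * s * p ^ 2) ^ 2 = ε ^ 2 * n * p ^ 4 := by rw [← hss]; ring
      rw [this, hnn]
      field_simp
      ring
    rw [e1, le_div_iff₀ (by positivity)]
    have := mul_le_mul hX1 hX1 (by positivity) (by positivity)
    rw [sq (ε * s * p ^ 2)]
    linarith
  · have h3 : 2048 * A * L ≤ M * L := mul_le_mul_of_nonneg_right hM2 (by linarith)
    have h4 : (ε / 4) ^ 2 * (f₀ / 2) / 4 = f₀ * ε ^ 2 / 128 := by ring
    rw [h4]
    have : 0 ≤ A * L := by positivity
    linarith
  · have e1 : 2 * (ε / 2 * j * p₀ ^ 2) ^ 2 / j = (ε * s * p₀ ^ 2) ^ 2 / (2 * k) := by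
      have : (ε * s * p₀ ^ 2) ^ 2 = ε ^ 2 * n * p₀ ^ 4 := by rw [← hss]; ring
      rw [this, hnn]
      field_simp
      try ring
    rw [e1, le_div_iff₀ (by positivity)]
    have := mul_le_mul hp0s hp0s (by positivity) (by positivity)
    have hAL : 0 ≤ A * L := by positivity
    have : A * L * (2 * k) ≤ 512 * k ^ 2 * (A * L) := by
      have : (2 * (k:ℝ)) ≤ 512 * k ^ 2 := by nlinarith
      rw [mul_comm (A * L)]
      exact mul_le_mul_of_nonneg_right this hAL
    rw [sq]
    linarith

theorem total_bound (k j r : ℕ) (hk : 2 ≤ k) (hj : 0 < j) (ε f₀ e : ℝ) (hε : 0 < ε)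
    (hε1 : ε ≤ 1) (hf : 0 < f₀) (hfn : f₀ ≤ ((k * j : ℕ) : ℝ))
    (hr : r = Nat.floor ((1 - ε) * ((k * j).choose k : ℝ) * f₀ / (j : ℝ) ^ 2))
    (he : e = Real.exp (-(((3 * k + 2 : ℕ) : ℝ) * Real.log ((k * j : ℕ) : ℝ)))) :
    (r * (4 * ((k * j : ℕ) : ℝ) ^ (2 * k)) + 2 * ((k * j : ℕ) : ℝ) ^ k + r * (4 * (j : ℝ) ^ 2)) * e
      ≤ 10 / ((k * j : ℕ) : ℝ) := by
  have hj' : (1:ℝ) ≤ j := by exact_mod_cast hj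
  have hjn : (j:ℝ) ≤ ((k * j : ℕ) : ℝ) := by
    exact_mod_cast Nat.le_mul_of_pos_left j (by omega)
  have hC : ((k * j).choose k : ℝ) ≤ ((k * j : ℕ) : ℝ) ^ k := by
    exact_mod_cast Nat.choose_le_pow (k * j) k
  set n : ℝ := ((k * j : ℕ) : ℝ) with hn
  have hn1 : 1 ≤ n := by linarith
  have hee : e * n ^ (3 * k + 2) = 1 := by
    rw [he, Real.exp_neg, Real.exp_nat_mul, Real.exp_log (by linarith)]
    exact inv_mul_cancel₀ (by positivity)
  have hrr : (r:ℝ) ≤ n ^ (k + 1) := by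
    rw [hr]
    refine (Nat.floor_le ?_).trans ?_
    · have : 0 ≤ 1 - ε := by linarith
      positivity
    · rw [div_le_iff₀ (by positivity)]
      have a1 : (1 - ε) * ((k * j).choose k : ℝ) ≤ n ^ k := by
        refine le_trans ?_ hC
        apply mul_le_of_le_one_left (by positivity); linarith
      have a2 : (1 - ε) * ((k * j).choose k : ℝ) * f₀ ≤ n ^ k * n :=
        mul_le_mul a1 hfn hf.le (by positivity)
      have a3 : n ^ k * n ≤ n ^ (k + 1) * (j:ℝ) ^ 2 := by
        rw [← pow_succ]
        apply le_mul_of_one_le_right (by positivity)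
        nlinarith
      linarith
  have he0 : 0 < e := by rw [he]; exact Real.exp_pos _
  have b1 : (r:ℝ) * (4 * n ^ (2 * k)) ≤ 4 * n ^ (3 * k + 1) := by
    have : (r:ℝ) * (4 * n ^ (2 * k)) ≤ n ^ (k + 1) * (4 * n ^ (2 * k)) :=
      mul_le_mul_of_nonneg_right hrr (by positivity)
    refine this.trans (le_of_eq ?_)
    have : 3 * k + 1 = (k + 1) + 2 * k := by ring
    rw [this, pow_add]; ring
  have b2 : 2 * n ^ k ≤ 2 * n ^ (3 * k + 1) := by
    have := pow_le_pow_right₀ hn1 (show k ≤ 3 * k + 1 by omega)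
    linarith
  have b3 : (r:ℝ) * (4 * (j:ℝ) ^ 2) ≤ 4 * n ^ (3 * k + 1) := by
    have c1 : (j:ℝ) ^ 2 ≤ n ^ 2 := by gcongr
    have : (r:ℝ) * (4 * (j:ℝ) ^ 2) ≤ n ^ (k + 1) * (4 * n ^ 2) :=
      mul_le_mul hrr (by linarith) (by positivity) (by positivity)
    have c2 := pow_le_pow_right₀ hn1 (show k + 1 + 2 ≤ 3 * k + 1 by omega)
    rw [pow_add] at c2
    linarith
  rw [le_div_iff₀ (by linarith)]
  calc _ ≤ (10 * n ^ (3 * k + 1)) * e * n := by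
        apply mul_le_mul_of_nonneg_right _ (by linarith)
        apply mul_le_mul_of_nonneg_right _ he0.le
        linarith
    _ = 10 * (e * n ^ (3 * k + 2)) := by ring
    _ = 10 := by rw [hee]; ring
    _ ≤ 10 := le_rfl

open scoped Classical in
/-- Lemma 10 of the paper: in the construction for a pseudo-random
`k`-uniform hypergraph `H` on `[n]` (`n = k j`, `k ≥ 2`) satisfying `R_a, …, R_f`,
whp every bipartite graph `G_i`, `i = 1, …, r`, has minimum degree at least
`(1-2ε)ν_k p₀` and all codegrees (within either part) at most `(1+5ε)ν_k p₀²`, where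
`ν_k = n/k = j`, `p₀ = p/f₀`, and `log²n/ε⁴ ≪ f₀² ≪ ε n^{1/2} p²/log n`,
`r = (1-ε)·C(n,k)·f₀/ν_k²`. -/
theorem stmt_12 (k : ℕ) (hk : 2 ≤ k)
    (H : ∀ j : ℕ, Finset (Finset (Fin (k * j))))
    (huniform : ∀ j, ∀ e ∈ H j, e.card = k)
    (p : ℕ → ℝ) (hp : ∀ j, p j = ((H j).card : ℝ) / (((k * j).choose k : ℕ) : ℝ))
    (ε : ℕ → ℝ) (hε0 : Tendsto ε atTop (nhds 0))
    (hεlim : Tendsto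
      (fun j => ε j * Real.sqrt ((k * j : ℕ) : ℝ) * (p j) ^ 2
                  / (Real.log ((k * j : ℕ) : ℝ)) ^ 5) atTop atTop)
    (hRa : ∀ j, ∀ S : Finset (Fin (k * j)), S.card = k / 2 →
      Nat.ceil ((1 - ε j) * (((k * j - k / 2).choose (k - k / 2) : ℕ) : ℝ) * p j)
        ≤ hDeg (k * j) k (H j) S)
    (hRb : ∀ j, ∀ S : Finset (Fin (k * j)), S.card = k - k / 2 →
      Nat.ceil ((1 - ε j) * (((k * j - (k - k / 2)).choose (k / 2) : ℕ) : ℝ) * p j)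
        ≤ hDeg (k * j) k (H j) S)
    (hRc : ∀ j, ∀ S : Finset (Fin (k * j)), S.card = k / 2 + 1 →
      (hDeg (k * j) k (H j) S : ℝ)
        ≤ (1 + ε j) * (((k * j - (k / 2 + 1)).choose (k - k / 2 - 1) : ℕ) : ℝ) * p j)
    (hRd : ∀ j, ∀ S : Finset (Fin (k * j)), S.card = (k - k / 2) + 1 →
      (hDeg (k * j) k (H j) S : ℝ)
        ≤ (1 + ε j) * (((k * j - (k - k / 2 + 1)).choose (k / 2 - 1) : ℕ) : ℝ) * p j)
    (hRe : ∀ j, ∀ S₁ S₂ : Finset (Fin (k * j)),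
      S₁.card = k / 2 → S₂.card = k / 2 → Disjoint S₁ S₂ →
      (hNbhd (k * j) k (H j) S₁ ∩ hNbhd (k * j) k (H j) S₂).card
        ≤ Nat.floor ((1 + ε j) * (((k * j - 2 * (k / 2)).choose (k - k / 2) : ℕ) : ℝ) * (p j) ^ 2))
    (hRf : ∀ j, ∀ S₁ S₂ : Finset (Fin (k * j)),
      S₁.card = k - k / 2 → S₂.card = k - k / 2 → Disjoint S₁ S₂ →
      (hNbhd (k * j) k (H j) S₁ ∩ hNbhd (k * j) k (H j) S₂).card
        ≤ Nat.floor ((1 + ε j) * (((k * j - 2 * (k - k / 2)).choose (k / 2) : ℕ) : ℝ) * (p j) ^ 2))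
    (f₀ : ℕ → ℝ)
    (hf₀lo : Tendsto (fun j => (f₀ j) ^ 2 * (ε j) ^ 4
      / (Real.log ((k * j : ℕ) : ℝ)) ^ 2) atTop atTop)
    (hf₀hi : Tendsto (fun j => (f₀ j) ^ 2 * Real.log ((k * j : ℕ) : ℝ)
      / (ε j * Real.sqrt ((k * j : ℕ) : ℝ) * (p j) ^ 2)) atTop (nhds 0))
    (r : ℕ → ℕ)
    (hr : ∀ j, r j = Nat.floor ((1 - ε j) * (((k * j).choose k : ℕ) : ℝ) * f₀ j / (j : ℝ) ^ 2))
    (p₀ : ℕ → ℝ) (hp₀ : ∀ j, p₀ j = p j / f₀ j) :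
    Tendsto (fun j : ℕ =>
        constrMeasure2 (k * j) (r j)
          {ω | ∀ i : Fin (r j),
            (∀ a : Fin j, (1 - 2 * ε j) * (j : ℝ) * p₀ j ≤
              ((Finset.univ.filter fun b : Fin j =>
                edgeP (k * j) k j (r j) (H j) ω i a b).card : ℝ)) ∧
            (∀ b : Fin j, (1 - 2 * ε j) * (j : ℝ) * p₀ j ≤
              ((Finset.univ.filter fun a : Fin j =>
                edgeP (k * j) k j (r j) (H j) ω i a b).card : ℝ)) ∧
            (∀ a₁ a₂ : Fin j, a₁ ≠ a₂ →
              ((Finset.univ.filter fun b : Fin j =>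
                  edgeP (k * j) k j (r j) (H j) ω i a₁ b ∧
                  edgeP (k * j) k j (r j) (H j) ω i a₂ b).card : ℝ)
                ≤ (1 + 5 * ε j) * (j : ℝ) * (p₀ j) ^ 2) ∧
            (∀ b₁ b₂ : Fin j, b₁ ≠ b₂ →
              ((Finset.univ.filter fun a : Fin j =>
                  edgeP (k * j) k j (r j) (H j) ω i a b₁ ∧
                  edgeP (k * j) k j (r j) (H j) ω i a b₂).card : ℝ)
                ≤ (1 + 5 * ε j) * (j : ℝ) * (p₀ j) ^ 2)})
      atTop (nhds (1 : ℝ≥0∞)) := by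
  have hprob : ∀ n r, IsProbabilityMeasure (constrMeasure2 n r) := by
    intro n r; unfold constrMeasure2; infer_instance
  have hn : Tendsto (fun j : ℕ => ((k * j : ℕ) : ℝ)) atTop atTop := by
    apply tendsto_natCast_atTop_atTop.comp
    exact tendsto_atTop_mono (fun j => Nat.le_mul_of_pos_left j (by omega)) tendsto_id
  have hLt := Real.tendsto_log_atTop.comp hn
  obtain ⟨A, hA⟩ : ∃ A : ℝ, A = ((3 * k + 2 : ℕ) : ℝ) := ⟨_, rfl⟩
  obtain ⟨M, hM⟩ : ∃ M : ℝ, M = 512 * k ^ 2 * A := ⟨_, rfl⟩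
  have hA1 : 1 ≤ A := by rw [hA]; exact_mod_cast (by omega : 1 ≤ 3 * k + 2)
  have hk0 : (0:ℝ) < k := by exact_mod_cast (by omega : 0 < k)
  have hMpos : 0 < M := by rw [hM]; positivity
  have hlim : Tendsto (fun j : ℕ => (1 : ℝ≥0∞) - ENNReal.ofReal (10 / ((k * j : ℕ) : ℝ))) atTop
      (nhds 1) := by
    have h1 : Tendsto (fun j : ℕ => ENNReal.ofReal (10 / ((k * j : ℕ) : ℝ))) atTop (nhds 0) := by
      rw [← ENNReal.ofReal_zero]
      exact ENNReal.tendsto_ofReal (hn.const_div_atTop 10)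
    have h2 := ENNReal.Tendsto.sub (tendsto_const_nhds (x := (1 : ℝ≥0∞)) (f := atTop)) h1
      (Or.inl ENNReal.one_ne_top)
    rwa [tsub_zero] at h2
  refine tendsto_of_tendsto_of_tendsto_of_le_of_le' hlim tendsto_const_nhds ?_
    (Eventually.of_forall fun j => prob_le_one)
  filter_upwards [eventually_gt_atTop 0, hLt.eventually_ge_atTop 1, hεlim.eventually_ge_atTop 1,
    hf₀lo.eventually_ge_atTop (M ^ 2),
    hf₀hi.eventually_lt_const (show (0:ℝ) < 1 / M by positivity),
    hε0.eventually_lt_const (show (0:ℝ) < 1 / 100 by norm_num)] with j hj hL1 he1 hlo hhi hε1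
  simp only [Function.comp] at hL1
  have hLpos : 0 < Real.log ((k * j : ℕ) : ℝ) := by linarith
  have hnpos : (0:ℝ) < ((k * j : ℕ) : ℝ) := by
    exact_mod_cast Nat.mul_pos (by omega : 0 < k) hj
  have hspos := Real.sqrt_pos.2 hnpos
  have hpnn : 0 ≤ p j := by rw [hp]; positivity
  have hnum : 0 < ε j * Real.sqrt ((k * j : ℕ) : ℝ) * (p j) ^ 2 := by
    by_contra h
    push Not at h
    have := div_nonpos_of_nonpos_of_nonneg h
      (show 0 ≤ (Real.log ((k * j : ℕ) : ℝ)) ^ 5 by positivity)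
    linarith
  have hppos : 0 < p j := by
    rcases hpnn.eq_or_lt with h | h
    · rw [← h] at hnum; simp at hnum
    · exact h
  have hεpos : 0 < ε j := by
    by_contra h
    push Not at h
    have := mul_nonpos_of_nonpos_of_nonneg (mul_nonpos_of_nonpos_of_nonneg h hspos.le)
      (sq_nonneg (p j))
    linarith
  have hp1 : p j ≤ 1 := by
    rw [hp]
    apply div_le_one_of_le₀ _ (by positivity)
    have : H j ⊆ Finset.powersetCard k Finset.univ := by
      intro x hx
      exact Finset.mem_powersetCard.2 ⟨Finset.subset_univ _, huniform j x hx⟩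
    have := Finset.card_le_card this
    rw [Finset.card_powersetCard, Finset.card_univ, Fintype.card_fin] at this
    exact_mod_cast this
  by_cases hf : 0 < f₀ j
  swap
  · have hr0 : r j = 0 := by
      rw [hr]
      apply Nat.floor_of_nonpos
      apply div_nonpos_of_nonpos_of_nonneg _ (by positivity)
      apply mul_nonpos_of_nonneg_of_nonpos
      · have : 0 ≤ 1 - ε j := by linarith
        positivity
      · exact not_lt.1 hf
    have : IsEmpty (Fin (r j)) := by rw [hr0]; infer_instance
    refine le_trans tsub_le_self ?_
    rw [← measure_univ (μ := constrMeasure2 (k * j) (r j))]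
    exact measure_mono fun ω _ i => isEmptyElim i
  have g1 : M * Real.log ((k * j : ℕ) : ℝ) ≤ f₀ j * ε j ^ 2 := by
    rw [le_div_iff₀ (by positivity)] at hlo
    rw [← sq_le_sq₀ (by positivity) (by positivity)]
    calc _ = M ^ 2 * Real.log ((k * j : ℕ) : ℝ) ^ 2 := by ring
      _ ≤ _ := hlo
      _ = _ := by ring
  have g2 : M * ((f₀ j) ^ 2 * Real.log ((k * j : ℕ) : ℝ))
      ≤ ε j * Real.sqrt ((k * j : ℕ) : ℝ) * (p j) ^ 2 := by
    rw [div_lt_div_iff₀ hnum hMpos] at hhi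
    linarith
  obtain ⟨q1, q2, q3, q4, q5, q6, q7⟩ := numerics k j hk hj (ε j) (p j) (f₀ j) (p₀ j) A M _ rfl hL1
    hA1 hM hεpos hε1.le hppos hp1 hf (hp₀ j) g1 g2
  have hkj : k ≤ k * j := Nat.le_mul_of_pos_right k hj
  have hss : ∀ s t : ℕ, s ≤ k → t ≤ k →
      (s : ℝ) * t ≤ ε j / 8 * ((k * j : ℕ) : ℝ) := by
    intro s t hs ht
    refine le_trans ?_ q4
    rw [sq]
    exact_mod_cast Nat.mul_le_mul hs ht
  have hfl : ∀ x : ℝ, ∀ m : ℕ, 0 ≤ x → m ≤ Nat.floor x → (m : ℝ) ≤ x := fun x m hx h =>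
    (Nat.le_floor_iff hx).1 h
  have hb := fin_bound k j (r j) hk hj (H j) (ε j) (p j) (f₀ j) (p₀ j)
    (Real.exp (-(((3 * k + 2 : ℕ) : ℝ) * Real.log ((k * j : ℕ) : ℝ)))) hεpos hε1.le hppos hp1 q1
    (hp₀ j) q2 (hr j)
    (fun S hS => Nat.ceil_le.1 (hRa j S hS))
    (fun S hS => Nat.ceil_le.1 (hRb j S hS))
    (fun S₁ S₂ h₁ h₂ hd => hfl _ _ (by positivity) (hRe j S₁ S₂ h₁ h₂ hd))
    (fun S₁ S₂ h₁ h₂ hd => hfl _ _ (by positivity) (hRf j S₁ S₂ h₁ h₂ hd))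
    (choose_ratio _ _ _ (by omega) (by omega) _ (hss _ _ (by omega) (by omega)))
    (choose_ratio _ _ _ (by omega) (by omega) _ (hss _ _ (by omega) (by omega)))
    (Real.exp_le_exp.2 (by rw [← hA]; linarith))
    (Real.exp_le_exp.2 (by rw [← hA]; linarith))
    (Real.exp_le_exp.2 (by rw [← hA]; linarith))
  have hb := hb.trans (total_bound k j (r j) hk hj (ε j) (f₀ j) _ hεpos (by linarith) hf q3 (hr j)
    rfl)
  have hb := ENNReal.ofReal_le_ofReal hb
  rw [ofReal_measureReal] at hb
  rw [tsub_le_iff_right]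
  refine le_trans ?_ (add_le_add le_rfl hb)
  rw [← measure_univ (μ := constrMeasure2 (k * j) (r j))]
  refine le_trans (measure_mono ?_) (measure_union_le _ _)
  intro ω _
  exact em _
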